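/- arXiv:1408.4093 — 7 statements merged into one kernel-verified Lean document; each statement's English description precedes it below -/
import Mathlib

section
/- For every finite poset P there exists a constant C > 0 such that for every natural number n, every family F of subsets of [n] = {1,…,n} that does not contain P as an induced subposet satisfies |F| ≤ C · C(n, ⌊n/2⌋), i.e., La#(n,P) ≤ C · C(n, ⌊n/2⌋). -/
/-- The family `F` of subsets of `[n]` contains the poset `P` as an induced subposet. -/
def ContainsInduced (P : Type*) [PartialOrder P] {n : ℕ}
    (F : Finset (Finset (Fin n))) : Prop :=
  ∃ α : P → Finset (Fin n), Function.Injective α ∧ (∀ p, α p ∈ F) ∧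
    ∀ x y : P, x < y ↔ α x ⊂ α y

/-!
Let `d + 1` be the number of elements of `P`. The proof combines two ideas.

*Forbidden patterns.* As in the theorem of Marcus and Tardos and its extension to arrays by Klazar
and Marcus, a subset of `[0, n)^(d + 1)` avoiding a pattern with `k` points has only `O(n ^ d)`
points: cut the cube into blocks of a fixed side `s`. The blocks that meet the set avoid the pattern
too, which gives a recursion in `n`. A block whose points have fewer than `k` values in every
coordinate contains at most `k ^ (d + 1)` of them, fewer than `s ^ d`. If the points of a block have
at least `k` different values in coordinate `i`, forget this coordinate: among the blocks with the
same `i`-th index and the same set of residues in direction `i`, the projections avoid the projected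
pattern, so that induction on the dimension bounds their number. A suitable pattern forces an
embedding of `P`, so the bound holds for `P`-free subsets of the cube.

*Averaging over grids*, after Methuku and Pálvölgyi. Split the ground set into one column of height
at least `2 n / 3` and `d` columns of height `⌊n / (3 (d + 1))⌋`. The unions of initial segments of
the columns form a grid, of which a `P`-free family contains only `O(n ^ d)` sets, whereas every
level between `n / 3` and `2 n / 3` meets it in at least a constant times `n ^ d` sets. Averaging
over all permutations of the ground set bounds the part of the family in these levels, and the
remaining levels are small because the binomial coefficients outside the middle third decrease
geometrically.
-/

open Finset

section Arrays

variable {ι κ : Type*} {d k n s : ℕ}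

/-- The point set `A` contains a copy of the pattern `π`: points of `A` indexed by `ι` which satisfy
every strict inequality between coordinates of the pattern. Equal coordinates of the pattern impose
no condition. -/
def ContainsPattern (π : ι → κ → ℕ) (A : Finset (κ → ℕ)) : Prop :=
  ∃ φ : ι → κ → ℕ, (∀ p, φ p ∈ A) ∧ ∀ p q i, π p i < π q i → φ p i < φ q i

/-- `K` bounds the extremal number of the pattern `π` in the cube `[0, n)^κ`. -/
def IsExtremalBound (π : ι → κ → ℕ) (n K : ℕ) : Prop :=
  ∀ A : Finset (κ → ℕ), (∀ a ∈ A, ∀ i, a i < n) → ¬ ContainsPattern π A → #A ≤ K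

lemma exists_forall_mem_forall_lt_of_card_le {β γ : Type*} [Fintype ι] [Preorder β] [LinearOrder γ]
    (f : ι → β) (S : Finset γ) (h : Fintype.card ι ≤ #S) :
    ∃ g : ι → γ, (∀ p, g p ∈ S) ∧ ∀ p q, f p < f q → g p < g q := by
  classical
  let rank (p : ι) : ℕ := #{r | f r < f p}
  have rank_lt_card (p : ι) : rank p < #S :=
    (card_lt_univ_of_notMem (x := p) (by simp)).trans_le h
  have rank_lt_rank {p q : ι} (hpq : f p < f q) : rank p < rank q :=
    card_lt_card <| (ssubset_iff_of_subset fun r hr => by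
      simpa using (mem_filter.1 hr).2.trans hpq).2 ⟨p, by simpa using hpq, by simp⟩
  exact ⟨fun p => S.orderEmbOfFin rfl ⟨rank p, rank_lt_card p⟩, fun p => orderEmbOfFin_mem _ _ _,
    fun p q hpq => (S.orderEmbOfFin rfl).lt_iff_lt.2 (rank_lt_rank hpq)⟩

lemma isExtremalBound_card_of_unique [Fintype ι] [Unique κ] (π : ι → κ → ℕ) (n : ℕ) :
    IsExtremalBound π n (Fintype.card ι) := by
  intro A _ hA
  by_contra! hlt
  obtain ⟨g, hgA, hg⟩ := exists_forall_mem_forall_lt_of_card_le (fun p => π p default)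
    (A.map (Equiv.funUnique κ ℕ).toEmbedding) (by simpa using hlt.le)
  refine hA ⟨fun p => (Equiv.funUnique κ ℕ).symm (g p), fun p => mem_map_equiv.1 (hgA p),
    fun p q i hi => hg p q ?_⟩
  rwa [Subsingleton.elim default i]

lemma isExtremalBound_one_one (π : ι → κ → ℕ) : IsExtremalBound π 1 1 := fun A hA _ =>
  card_le_one.2 fun a ha b hb => funext fun i => by
    rw [Nat.lt_one_iff.1 (hA a ha i), Nat.lt_one_iff.1 (hA b hb i)]

variable [Fintype κ]

/-- The index of the block of side `s` containing the point `a`. -/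
def block (s : ℕ) (a : κ → ℕ) : κ → ℕ := fun i => a i / s

/-- The residues modulo `s` of the `i`-th coordinates of the points of `A` in the block `b`. As all
these coordinates have the same quotient by `s`, the residues stand for their distinct values. -/
def residues (s : ℕ) (A : Finset (κ → ℕ)) (b : κ → ℕ) (i : κ) : Finset ℕ :=
  {a ∈ A | block s a = b}.image fun a => a i % s

/-- The blocks that are wide in direction `i`: their points have at least `k` different `i`-th
coordinates. -/
def wideBlocks (s k : ℕ) (A : Finset (κ → ℕ)) (i : κ) : Finset (κ → ℕ) :=
  {b ∈ A.image (block s) | k ≤ #(residues s A b i)}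

lemma ContainsPattern.of_image_block {π : ι → κ → ℕ} {A : Finset (κ → ℕ)}
    (h : ContainsPattern π (A.image (block s))) : ContainsPattern π A := by
  obtain ⟨φ, hφA, hφ⟩ := h
  choose a haA haφ using fun p => mem_image.1 (hφA p)
  refine ⟨a, haA, fun p q i hi => ?_⟩
  have hdiv := hφ p q i hi
  rw [← haφ, ← haφ] at hdiv
  exact Nat.lt_of_div_lt_div hdiv

lemma lt_of_mem_image_block {A : Finset (κ → ℕ)} (hA : ∀ a ∈ A, ∀ i, a i < s * n) :
    ∀ b ∈ A.image (block s), ∀ i, b i < n :=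
  forall_mem_image.2 fun a ha i => Nat.div_lt_of_lt_mul (hA a ha i)

lemma residues_subset_range (hs : 0 < s) (A : Finset (κ → ℕ)) (b : κ → ℕ) (i : κ) :
    residues s A b i ⊆ range s :=
  image_subset_iff.2 fun _ _ => mem_range.2 (Nat.mod_lt _ hs)

lemma card_filter_block_eq_le_prod (s : ℕ) (A : Finset (κ → ℕ)) (b : κ → ℕ) :
    #{a ∈ A | block s a = b} ≤ ∏ i, #(residues s A b i) := by
  classical
  rw [← Fintype.card_piFinset]
  refine card_le_card_of_injOn (fun a i => a i % s)
    (fun a ha => Fintype.mem_piFinset.2 fun i => mem_image_of_mem (fun a => a i % s) ha) ?_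
  intro a ha a' ha' hmod
  have hdiv : block s a = block s a' := (mem_filter.1 ha).2.trans (mem_filter.1 ha').2.symm
  funext i
  rw [← Nat.div_add_mod (a i) s, ← Nat.div_add_mod (a' i) s]
  exact congrArg₂ (s * · + ·) (congrFun hdiv i) (congrFun hmod i)

lemma card_le_card_image_block_add_sum_card_wideBlocks (hs : 0 < s) (k : ℕ)
    (A : Finset (κ → ℕ)) :
    #A ≤ #(A.image (block s)) * k ^ Fintype.card κ +
      (∑ i, #(wideBlocks s k A i)) * s ^ Fintype.card κ := by
  set W := univ.biUnion (wideBlocks s k A)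
  have card_block_le {b : κ → ℕ} {m : ℕ} (h : ∀ i, #(residues s A b i) ≤ m) :
      #{a ∈ A | block s a = b} ≤ m ^ Fintype.card κ :=
    (card_filter_block_eq_le_prod s A b).trans (prod_le_pow_card _ _ m fun i _ => h i)
  have hnarrow : #{a ∈ A | block s a ∉ W} ≤ k ^ Fintype.card κ * #(A.image (block s)) := by
    refine (card_le_mul_card_image_of_maps_to (t := A.image (block s) \ W) (fun a ha =>
      mem_sdiff.2 ⟨mem_image_of_mem _ (mem_filter.1 ha).1, (mem_filter.1 ha).2⟩) _
      fun b hb => ?_).trans (Nat.mul_le_mul_left _ (card_le_card sdiff_subset))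
    refine (card_le_card (filter_subset_filter _ (filter_subset _ _))).trans
      (card_block_le fun i => ?_)
    by_contra! hi
    obtain ⟨hbA, hbW⟩ := mem_sdiff.1 hb
    exact hbW (mem_biUnion.2 ⟨i, mem_univ i, mem_filter.2 ⟨hbA, hi.le⟩⟩)
  have hwide : #{a ∈ A | block s a ∈ W} ≤ s ^ Fintype.card κ * #W := by
    refine card_le_mul_card_image_of_maps_to (fun a ha => (mem_filter.1 ha).2) _ fun b _ => ?_
    refine (card_le_card (filter_subset_filter _ (filter_subset _ _))).trans
      (card_block_le fun i => ?_)
    simpa using card_le_card (residues_subset_range hs A b i)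
  calc #A = #{a ∈ A | block s a ∉ W} + #{a ∈ A | block s a ∈ W} := by
        rw [add_comm, card_filter_add_card_filter_not]
    _ ≤ k ^ Fintype.card κ * #(A.image (block s)) + s ^ Fintype.card κ * #W :=
        add_le_add hnarrow hwide
    _ ≤ _ := by
        rw [mul_comm, mul_comm _ (#W)]
        gcongr
        exact card_biUnion_le

/-- All blocks of `B` offer the same `i`-th coordinates, so points realizing the `i`-th coordinates
of the pattern can be chosen in them independently. -/
lemma ContainsPattern.of_image_removeNth [Fintype ι] {π : ι → Fin (d + 1) → ℕ}
    {A B : Finset (Fin (d + 1) → ℕ)} {i : Fin (d + 1)} {v : ℕ} {T : Finset ℕ}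
    (hB : ∀ b ∈ B, b i = v ∧ residues s A b i = T) (hT : Fintype.card ι ≤ #T)
    (h : ContainsPattern (fun p => i.removeNth (π p)) (B.image i.removeNth)) :
    ContainsPattern π A := by
  obtain ⟨ψ, hψB, hψ⟩ := h
  choose b hbB hbψ using fun p => mem_image.1 (hψB p)
  obtain ⟨g, hgT, hg⟩ := exists_forall_mem_forall_lt_of_card_le (fun p => π p i) T hT
  have exists_point (p : ι) : ∃ a ∈ A, block s a = b p ∧ a i % s = g p := by
    simpa only [← (hB _ (hbB p)).2, residues, mem_image, mem_filter, and_assoc] using hgT p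
  choose a haA hab hag using exists_point
  refine ⟨a, haA, fun p q j hj => ?_⟩
  rcases Fin.eq_self_or_eq_succAbove i j with rfl | ⟨j, rfl⟩
  · have hdiv (p : ι) : a p j / s = v := (congrFun (hab p) j).trans (hB _ (hbB p)).1
    rw [← Nat.div_add_mod (a p j) s, ← Nat.div_add_mod (a q j) s, hdiv, hdiv, hag, hag]
    exact Nat.add_lt_add_left (hg p q hj) _
  · have hdiv := hψ p q j hj
    rw [← hbψ, ← hbψ, ← hab, ← hab] at hdiv
    exact Nat.lt_of_div_lt_div hdiv

lemma card_wideBlocks_le [Fintype ι] {K : ℕ} (hs : 0 < s) {π : ι → Fin (d + 1) → ℕ}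
    {i : Fin (d + 1)} (hK : IsExtremalBound (fun p => i.removeNth (π p)) n K)
    {A : Finset (Fin (d + 1) → ℕ)} (hA : ∀ a ∈ A, ∀ j, a j < s * n)
    (hπ : ¬ ContainsPattern π A) :
    #(wideBlocks s (Fintype.card ι) A i) ≤ K * (n * 2 ^ s) := by
  set W := wideBlocks s (Fintype.card ι) A i
  have lt_of_mem_W {b : Fin (d + 1) → ℕ} (hb : b ∈ W) : ∀ j, b j < n :=
    lt_of_mem_image_block hA b (mem_filter.1 hb).1
  have hcard : #(range n ×ˢ (range s).powerset) = n * 2 ^ s := by simp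
  rw [← hcard]
  refine card_le_mul_card_image_of_maps_to (f := fun b => (b i, residues s A b i))
    (fun b hb => mem_product.2 ⟨mem_range.2 (lt_of_mem_W hb i),
      mem_powerset.2 (residues_subset_range hs A b i)⟩) K ?_
  rintro ⟨v, T⟩ -
  set V := {b ∈ W | (b i, residues s A b i) = (v, T)}
  have hV : ∀ b ∈ V, b i = v ∧ residues s A b i = T := fun b hb =>
    Prod.mk.inj (mem_filter.1 hb).2
  rcases V.eq_empty_or_nonempty with hempty | ⟨b₀, hb₀⟩
  · simp [hempty]
  have hT : Fintype.card ι ≤ #T :=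
    (hV b₀ hb₀).2 ▸ (mem_filter.1 (mem_filter.1 hb₀).1).2
  have removeNth_injOn : Set.InjOn i.removeNth (V : Set (Fin (d + 1) → ℕ)) := by
    intro b hb b' hb' hbb'
    rw [← Fin.insertNth_self_removeNth i b, ← Fin.insertNth_self_removeNth i b', hbb',
      (hV b hb).1, (hV b' hb').1]
  rw [← card_image_of_injOn removeNth_injOn]
  exact hK _ (forall_mem_image.2 fun b hb j => lt_of_mem_W (mem_filter.1 hb).1 _)
    fun h => hπ (h.of_image_removeNth hV hT)

lemma IsExtremalBound.mul_side [Fintype ι] {K L : ℕ} {π : ι → Fin (d + 1) → ℕ} (hs : 0 < s)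
    (hK : ∀ i : Fin (d + 1), IsExtremalBound (fun p => i.removeNth (π p)) n K)
    (hL : IsExtremalBound π n L) :
    IsExtremalBound π (s * n)
      (L * Fintype.card ι ^ (d + 1) + (d + 1) * (K * (n * 2 ^ s)) * s ^ (d + 1)) := by
  intro A hA hπ
  have hblocks : #(A.image (block s)) ≤ L :=
    hL _ (lt_of_mem_image_block hA) fun h => hπ h.of_image_block
  have hwide : ∑ i, #(wideBlocks s (Fintype.card ι) A i) ≤ (d + 1) * (K * (n * 2 ^ s)) := by
    simpa using sum_le_card_nsmul univ _ _ fun i _ => card_wideBlocks_le hs (hK i) hA hπ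
  have hcard := card_le_card_image_block_add_sum_card_wideBlocks hs (Fintype.card ι) A
  rw [Fintype.card_fin] at hcard
  exact hcard.trans (by gcongr)

/-- The side `s = (k + 2) ^ 2` works in every dimension because `k ^ (d + 1) < s ^ d` for `d ≥ 1`,
so that the number of points in narrow blocks does not accumulate in the recursion. -/
lemma exists_isExtremalBound_pow (ι : Type*) [Fintype ι] (d : ℕ) :
    ∃ C : ℕ, ∀ (π : ι → Fin (d + 1) → ℕ) (j : ℕ),
      IsExtremalBound π (((Fintype.card ι + 2) ^ 2) ^ j)
        (C * (((Fintype.card ι + 2) ^ 2) ^ j) ^ d) := by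
  set k := Fintype.card ι with hk
  set s := (k + 2) ^ 2 with hs
  induction d with
  | zero => exact ⟨k, fun π j => by simpa using isExtremalBound_card_of_unique (κ := Fin 1) π _⟩
  | succ d ih =>
    obtain ⟨K, hK⟩ := ih
    set D := (d + 2) * (K * 2 ^ s) * s ^ (d + 2) with hD
    have hpow : k ^ (d + 2) + 1 ≤ s ^ (d + 1) := by
      calc k ^ (d + 2) + 1 ≤ (k + 2) ^ (d + 2) := Nat.pow_lt_pow_left (by lia) (by lia)
        _ ≤ (k + 2) ^ (2 * (d + 1)) := Nat.pow_le_pow_right (by lia) (by lia)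
        _ = s ^ (d + 1) := by rw [hs, pow_mul]
    refine ⟨D + 1, fun π j => ?_⟩
    induction j with
    | zero =>
      exact fun A hA hπ => (isExtremalBound_one_one π A (by simpa using hA) hπ).trans (by simp)
    | succ j ihj =>
      intro A hA hπ
      have hrec := ihj.mul_side (s := s) (by positivity) (fun i => hK _ j) A
        (by rwa [← pow_succ']) hπ
      calc #A ≤ _ := hrec
        _ = ((D + 1) * k ^ (d + 2) + D) * (s ^ j) ^ (d + 1) := by rw [hD, ← hk]; ring
        _ ≤ ((D + 1) * (k ^ (d + 2) + 1)) * (s ^ j) ^ (d + 1) := by gcongr; lia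
        _ ≤ ((D + 1) * s ^ (d + 1)) * (s ^ j) ^ (d + 1) := by gcongr
        _ = (D + 1) * (s ^ (j + 1)) ^ (d + 1) := by rw [mul_assoc, ← mul_pow, ← pow_succ']

theorem exists_isExtremalBound (ι : Type*) [Finite ι] (d : ℕ) :
    ∃ C : ℕ, ∀ (π : ι → Fin (d + 1) → ℕ) (n : ℕ), IsExtremalBound π n (C * n ^ d) := by
  have := Fintype.ofFinite ι
  obtain ⟨C, hC⟩ := exists_isExtremalBound_pow ι d
  set s := (Fintype.card ι + 2) ^ 2
  have hs : 1 < s := Nat.one_lt_pow two_ne_zero (by lia)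
  refine ⟨C * s ^ d, fun π n A hA hπ => ?_⟩
  rcases A.eq_empty_or_nonempty with rfl | ⟨a, ha⟩
  · simp
  have hn : n ≠ 0 := (Nat.zero_lt_of_lt (hA a ha 0)).ne'
  calc #A ≤ C * (s ^ (Nat.log s n + 1)) ^ d :=
        hC π _ A (fun a ha i => (hA a ha i).trans (Nat.lt_pow_succ_log_self hs n)) hπ
    _ ≤ C * (s * n) ^ d := by
        rw [pow_succ']
        gcongr
        exact Nat.pow_log_le_self s hn
    _ = C * s ^ d * n ^ d := by rw [mul_pow, mul_assoc]

end Arrays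

section Posets

variable {P : Type*} [PartialOrder P] [Finite P]

/-- In each coordinate the pattern increases strictly along `P`, and in a coordinate `i` with
`x i = q` all `p ≤ q` precede all other elements. -/
lemma exists_pattern_forall_nonempty_orderEmbedding {κ : Type*} {x : κ → P}
    (hx : Function.Surjective x) :
    ∃ π : P → κ → ℕ, ∀ A : Finset (κ → ℕ), ContainsPattern π A → Nonempty (P ↪o A) := by
  classical
  have := Fintype.ofFinite P
  let π (p : P) (i : κ) : ℕ := #{r | r < p} + if p ≤ x i then 0 else Fintype.card P
  have π_strictMono {p q : P} (hpq : p < q) (i : κ) : π p i < π q i := by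
    refine add_lt_add_of_lt_of_le (card_lt_card ?_) ?_
    · exact (ssubset_iff_of_subset fun r hr => by simpa using (mem_filter.1 hr).2.trans hpq).2
        ⟨p, by simpa using hpq, by simp⟩
    · by_cases hq : q ≤ x i
      · simp [hq, hpq.le.trans hq]
      · simp only [hq, if_false]
        split_ifs <;> simp
  have π_separates {p q : P} (hpq : ¬ p ≤ q) {i : κ} (hi : x i = q) : π q i < π p i := by
    have : #{r | r < q} < Fintype.card P := card_lt_univ_of_notMem (x := q) (by simp)
    simp only [π, hi, le_refl, hpq, if_true, if_false]
    lia
  refine ⟨π, fun A => ?_⟩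
  rintro ⟨φ, hφA, hφ⟩
  refine ⟨OrderEmbedding.ofMapLEIff (fun p => ⟨φ p, hφA p⟩) fun p q => ⟨fun hle => ?_, ?_⟩⟩
  · by_contra hpq
    obtain ⟨i, hi⟩ := hx q
    exact (hφ q p i (π_separates hpq hi)).not_ge (hle i)
  · rintro hpq i
    rcases hpq.eq_or_lt with rfl | hlt
    · exact le_rfl
    · exact (hφ p q i (π_strictMono hlt i)).le

theorem exists_card_le_mul_pow_of_isEmpty_orderEmbedding {d : ℕ} (hP : Nat.card P = d + 1) :
    ∃ C : ℕ, ∀ (n : ℕ) (A : Finset (Fin (d + 1) → ℕ)), (∀ a ∈ A, ∀ i, a i < n) →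
      IsEmpty (P ↪o A) → #A ≤ C * n ^ d := by
  obtain ⟨π, hπ⟩ :=
    exists_pattern_forall_nonempty_orderEmbedding (Finite.equivFinOfCardEq hP).symm.surjective
  obtain ⟨C, hC⟩ := exists_isExtremalBound P d
  exact ⟨C, fun n A hA hempty => hC π n A hA fun h => not_nonempty_iff.2 hempty (hπ A h)⟩

end Posets

section Levels

lemma two_mul_choose_le_choose_succ {n t : ℕ} (h : 3 * t + 2 ≤ n) :
    2 * n.choose t ≤ n.choose (t + 1) := by
  refine Nat.le_of_mul_le_mul_right (c := t + 1) ?_ t.succ_pos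
  calc 2 * n.choose t * (t + 1) = n.choose t * (2 * (t + 1)) := by ring
    _ ≤ n.choose t * (n - t) := Nat.mul_le_mul_left _ (by lia)
    _ = n.choose (t + 1) * (t + 1) := (Nat.choose_succ_right_eq n t).symm

lemma sum_range_choose_le_two_mul_choose {n t : ℕ} (h : 3 * t ≤ n + 1) :
    ∑ i ∈ range (t + 1), n.choose i ≤ 2 * n.choose t := by
  induction t with
  | zero => simp
  | succ t ih =>
    rw [sum_range_succ, two_mul]
    gcongr
    exact (ih (by lia)).trans (two_mul_choose_le_choose_succ (by lia))

variable {α : Type*} [Fintype α]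

lemma card_filter_three_mul_card_le :
    #{A : Finset α | 3 * #A ≤ Fintype.card α} ≤
      2 * (Fintype.card α).choose (Fintype.card α / 2) := by
  set n := Fintype.card α with hn
  calc #{A : Finset α | 3 * #A ≤ n}
      = ∑ t ∈ range (n / 3 + 1), #{A ∈ {A : Finset α | 3 * #A ≤ n} | #A = t} := by
        refine card_eq_sum_card_fiberwise fun A hA => ?_
        have := (mem_filter.1 hA).2
        simp only [coe_range, Set.mem_Iio]
        lia
    _ ≤ ∑ t ∈ range (n / 3 + 1), n.choose t := by
        refine sum_le_sum fun t _ => ?_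
        rw [hn, ← card_univ, ← card_powersetCard]
        exact card_le_card fun A hA =>
          mem_powersetCard.2 ⟨subset_univ A, (mem_filter.1 hA).2⟩
    _ ≤ 2 * n.choose (n / 3) := sum_range_choose_le_two_mul_choose (by lia)
    _ ≤ 2 * n.choose (n / 2) := Nat.mul_le_mul_left _ (Nat.choose_le_middle _ _)

lemma card_filter_two_mul_card_le_three_mul :
    #{A : Finset α | 2 * Fintype.card α ≤ 3 * #A} ≤
      2 * (Fintype.card α).choose (Fintype.card α / 2) := by
  classical
  refine le_trans (card_le_card_of_injOn compl (fun A hA => ?_) compl_injective.injOn)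
    card_filter_three_mul_card_le
  have := (mem_filter.1 hA).2
  refine mem_filter.2 ⟨mem_univ _, ?_⟩
  rw [card_compl]
  lia

lemma card_le_card_filter_middle_add (F : Finset (Finset α)) :
    #F ≤ #{A ∈ F | Fintype.card α ≤ 3 * #A ∧ 3 * #A ≤ 2 * Fintype.card α} +
      4 * (Fintype.card α).choose (Fintype.card α / 2) := by
  classical
  set n := Fintype.card α
  have hcover : F ⊆ {A ∈ F | n ≤ 3 * #A ∧ 3 * #A ≤ 2 * n} ∪
      (({A | 3 * #A ≤ n} : Finset (Finset α)) ∪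
        ({A | 2 * n ≤ 3 * #A} : Finset (Finset α))) := fun A hA => by
    simp only [mem_union, mem_filter, hA, mem_univ, true_and]
    lia
  have hsmall : #{A : Finset α | 3 * #A ≤ n} ≤ 2 * n.choose (n / 2) :=
    card_filter_three_mul_card_le
  have hlarge : #{A : Finset α | 2 * n ≤ 3 * #A} ≤ 2 * n.choose (n / 2) :=
    card_filter_two_mul_card_le_three_mul
  refine (card_le_card hcover).trans ((card_union_le _ _).trans (Nat.add_le_add_left ?_ _))
  exact (card_union_le _ _).trans (by lia)

end Levels

section Averaging

variable {α γ : Type*} [Fintype α] [DecidableEq α]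

/-- Fixing a numbering with prefix `X`, the permutations carrying `X` onto `A` correspond to the
numberings with prefix `A`. -/
lemma card_filter_perm_map_eq {X A : Finset α} (h : #X = #A) :
    #{σ : Equiv.Perm α | X.map σ.toEmbedding = A} =
      (#A).factorial * (Fintype.card α - #A).factorial := by
  obtain ⟨e, he⟩ : (Numbering.prefixed X).Nonempty := by
    rw [← card_pos, Numbering.card_prefixed]
    positivity
  rw [← Numbering.card_prefixed]
  refine card_equiv ((Equiv.inv (Equiv.Perm α)).trans (Equiv.equivCongr (Equiv.refl α) e)) ?_
  intro σ
  have mem_map_iff (x : α) : x ∈ X.map σ.toEmbedding ↔ (e (σ.symm x) : ℕ) < #A := by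
    rw [mem_map_equiv, ← h]
    exact Numbering.mem_prefixed.1 he _
  simp only [mem_filter, mem_univ, true_and, Numbering.mem_prefixed, Numbering.IsPrefix,
    Finset.ext_iff, mem_map_iff]
  exact forall_congr' fun x => iff_comm

lemma sum_perm_card_filter_map_mem (F : Finset (Finset α)) (s : Finset γ) (f : γ → Finset α) :
    ∑ σ : Equiv.Perm α, #{c ∈ s | (f c).map σ.toEmbedding ∈ F} =
      ∑ A ∈ F, #{c ∈ s | #(f c) = #A} *
        ((#A).factorial * (Fintype.card α - #A).factorial) := by
  have card_perm (c : γ) (A : Finset α) : #{σ : Equiv.Perm α | (f c).map σ.toEmbedding = A} =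
      if #(f c) = #A then (#A).factorial * (Fintype.card α - #A).factorial else 0 := by
    split_ifs with h
    · exact card_filter_perm_map_eq h
    · refine card_eq_zero.2 (filter_eq_empty_iff.2 fun σ _ hσ => h ?_)
      rw [← hσ, card_map]
  calc ∑ σ : Equiv.Perm α, #{c ∈ s | (f c).map σ.toEmbedding ∈ F}
      = ∑ σ : Equiv.Perm α, ∑ c ∈ s, ∑ A ∈ F, if (f c).map σ.toEmbedding = A then 1 else 0 := by
        simp only [card_filter, sum_ite_eq]
    _ = ∑ A ∈ F, ∑ c ∈ s, #{σ : Equiv.Perm α | (f c).map σ.toEmbedding = A} := by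
        simp only [card_filter]
        rw [sum_comm, sum_comm (s := F)]
        exact sum_congr rfl fun c _ => sum_comm
    _ = _ := by simp only [card_perm, ← sum_filter, sum_const, smul_eq_mul]

/-- Averaging over the images of the family `f` under permutations: the probability that a random
permutation carries a given set onto `A` is at least `1 / C(n, ⌊n/2⌋)`. -/
lemma card_mul_le_mul_choose_of_forall_perm {F : Finset (Finset α)} {s : Finset γ}
    {f : γ → Finset α} {K L : ℕ} (hL : ∀ A ∈ F, L ≤ #{c ∈ s | #(f c) = #A})
    (hK : ∀ σ : Equiv.Perm α, #{c ∈ s | (f c).map σ.toEmbedding ∈ F} ≤ K) :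
    #F * L ≤ K * (Fintype.card α).choose (Fintype.card α / 2) := by
  set n := Fintype.card α
  have factorial_le (A : Finset α) :
      n.factorial ≤ (#A).factorial * (n - #A).factorial * n.choose (n / 2) := by
    rw [← Nat.choose_mul_factorial_mul_factorial (card_le_univ A), mul_assoc, mul_comm]
    gcongr
    exact Nat.choose_le_middle _ _
  refine Nat.le_of_mul_le_mul_right (c := n.factorial) ?_ n.factorial_pos
  calc #F * L * n.factorial = ∑ _A ∈ F, L * n.factorial := by
        rw [sum_const, smul_eq_mul, mul_assoc]
    _ ≤ ∑ A ∈ F, #{c ∈ s | #(f c) = #A} *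
          ((#A).factorial * (n - #A).factorial * n.choose (n / 2)) :=
        sum_le_sum fun A hA => Nat.mul_le_mul (hL A hA) (factorial_le A)
    _ = (∑ σ : Equiv.Perm α, #{c ∈ s | (f c).map σ.toEmbedding ∈ F}) * n.choose (n / 2) := by
        rw [sum_perm_card_filter_map_mem, sum_mul]
        exact sum_congr rfl fun A _ => (mul_assoc _ _ _).symm
    _ ≤ n.factorial * K * n.choose (n / 2) := by
        gcongr
        simpa [Fintype.card_perm] using sum_le_card_nsmul univ _ K fun σ _ => hK σ
    _ = K * n.choose (n / 2) * n.factorial := by ring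

end Averaging

section Columns

variable {κ : Type*} [Fintype κ] {h : κ → ℕ}

/-- The union of the initial segments of lengths `c i` of disjoint columns of heights `h i`. The
sets `initialSegments h c` with `c ≤ h` form a copy of the grid `∏ i, [0, h i]`. -/
def initialSegments (h c : κ → ℕ) : Finset (Σ i, Fin (h i)) :=
  univ.sigma fun i => {y | y.val < c i}

lemma card_initialSegments {c : κ → ℕ} (hc : c ≤ h) : #(initialSegments h c) = ∑ i, c i := by
  rw [initialSegments, card_sigma]
  exact sum_congr rfl fun i _ => by rw [Fin.card_filter_val_lt, min_eq_right (hc i)]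

lemma initialSegments_subset_iff {c c' : κ → ℕ} (hc : c ≤ h) :
    initialSegments h c ⊆ initialSegments h c' ↔ c ≤ c' := by
  simp only [initialSegments, subset_iff, mem_sigma, mem_filter, mem_univ, true_and,
    Sigma.forall]
  refine ⟨fun hsub i => ?_, fun hle i y hy => hy.trans_le (hle i)⟩
  by_contra! hlt
  exact lt_irrefl _ (hsub i ⟨c' i, hlt.trans_le (hc i)⟩ hlt)

lemma nonempty_orderEmbedding_filter_initialSegments {α : Type*} [DecidableEq α] [DecidableEq κ]
    (e : (Σ i, Fin (h i)) ≃ α) (F : Finset (Finset α)) :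
    Nonempty ({c ∈ Iic h | (initialSegments h c).map e.toEmbedding ∈ F} ↪o F) :=
  ⟨OrderEmbedding.ofMapLEIff (fun c => ⟨_, (mem_filter.1 c.2).2⟩) fun c _ =>
    map_subset_map.trans (initialSegments_subset_iff (mem_Iic.1 (mem_filter.1 c.2).1))⟩

/-- Below the height of the long column `0`, the heights in the other columns are arbitrary. -/
lemma prod_le_card_filter_sum_eq {d t : ℕ} {h : Fin (d + 1) → ℕ} (hle : ∑ i : Fin d, h i.succ ≤ t)
    (ht : t ≤ h 0) : ∏ i : Fin d, (h i.succ + 1) ≤ #{c ∈ Iic h | ∑ i, c i = t} := by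
  have hcard : #(Iic (Fin.tail h)) = ∏ i : Fin d, (h i.succ + 1) := by
    simp [Pi.card_Iic, Fin.tail]
  rw [← hcard]
  refine card_le_card_of_injOn (fun c => Fin.cons (t - ∑ i, c i) c) (fun c hc => ?_)
    fun c _ c' _ hcc' => (Fin.cons_injective2 hcc').2
  have hc : c ≤ Fin.tail h := mem_Iic.1 hc
  have hsum : ∑ i, c i ≤ t := (sum_le_sum fun i _ => hc i).trans hle
  refine mem_filter.2 ⟨mem_Iic.2 (Fin.cons_le.2 ⟨(Nat.sub_le _ _).trans ht, hc⟩), ?_⟩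
  simp [Fin.sum_univ_succ, Nat.sub_add_cancel hsum]

lemma exists_columns (d n : ℕ) :
    ∃ h : Fin (d + 1) → ℕ, ∑ i, h i = n ∧ 3 * ∑ i : Fin d, h i.succ ≤ n ∧ 2 * n ≤ 3 * h 0 ∧
      (n + 1) ^ d ≤ (3 * (d + 1)) ^ d * ∏ i : Fin d, (h i.succ + 1) := by
  set m := n / (3 * (d + 1))
  have hdm : 3 * (d * m) ≤ n := by
    have := Nat.mul_div_le n (3 * (d + 1))
    lia
  have hmn : n + 1 ≤ 3 * (d + 1) * (m + 1) := Nat.lt_mul_div_succ n (by positivity)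
  refine ⟨Fin.cons (n - d * m) fun _ => m, ?_, ?_, ?_, ?_⟩
  · simp only [Fin.sum_univ_succ, Fin.cons_zero, Fin.cons_succ, sum_const, card_univ,
      Fintype.card_fin, smul_eq_mul]
    lia
  · simpa using hdm
  · simp only [Fin.cons_zero]
    lia
  · simpa [← mul_pow] using Nat.pow_le_pow_left hmn d

end Columns

lemma exists_card_filter_middle_le {P : Type*} [PartialOrder P] [Finite P] {d : ℕ}
    (hP : Nat.card P = d + 1) :
    ∃ C : ℕ, ∀ {α : Type*} [Fintype α] (F : Finset (Finset α)), IsEmpty (P ↪o F) →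
      #{A ∈ F | Fintype.card α ≤ 3 * #A ∧ 3 * #A ≤ 2 * Fintype.card α} ≤
        C * (Fintype.card α).choose (Fintype.card α / 2) := by
  classical
  obtain ⟨C, hC⟩ := exists_card_le_mul_pow_of_isEmpty_orderEmbedding hP
  refine ⟨C * (3 * (d + 1)) ^ d, fun {α} _ F hF => ?_⟩
  set n := Fintype.card α
  set M := {A ∈ F | n ≤ 3 * #A ∧ 3 * #A ≤ 2 * n}
  obtain ⟨h, hsum, htail, hhead, hprod⟩ := exists_columns d n
  let e : (Σ i, Fin (h i)) ≃ α := Fintype.equivOfCardEq (by simpa using hsum)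
  have hgrid (σ : Equiv.Perm α) :
      #{c ∈ Iic h | ((initialSegments h c).map e.toEmbedding).map σ.toEmbedding ∈ M} ≤
        C * (n + 1) ^ d := by
    simp only [map_map, ← Equiv.trans_toEmbedding]
    obtain ⟨ι⟩ := nonempty_orderEmbedding_filter_initialSegments (e.trans σ) F
    refine (card_le_card (monotone_filter_right _ fun c _ hc => (mem_filter.1 hc).1)).trans
      (hC _ _ (fun c hc i => Nat.lt_succ_of_le ?_) ⟨fun j => hF.false (j.trans ι)⟩)
    calc c i ≤ h i := mem_Iic.1 (mem_filter.1 hc).1 i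
      _ ≤ ∑ i, h i := single_le_sum (fun _ _ => Nat.zero_le _) (mem_univ i)
      _ = n := hsum
  have hlevel : ∀ A ∈ M, ∏ i : Fin d, (h i.succ + 1) ≤
      #{c ∈ Iic h | #((initialSegments h c).map e.toEmbedding) = #A} := by
    intro A hA
    obtain ⟨-, hlower, hupper⟩ := mem_filter.1 hA
    refine (prod_le_card_filter_sum_eq (t := #A) (by lia) (by lia)).trans_eq
      (congrArg card (filter_congr fun c hc => ?_))
    rw [card_map, card_initialSegments (mem_Iic.1 hc)]
  refine Nat.le_of_mul_le_mul_right (c := ∏ i : Fin d, (h i.succ + 1)) ?_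
    (prod_pos fun i _ => Nat.succ_pos _)
  calc #M * ∏ i : Fin d, (h i.succ + 1) ≤ C * (n + 1) ^ d * n.choose (n / 2) :=
        card_mul_le_mul_choose_of_forall_perm hlevel hgrid
    _ ≤ C * ((3 * (d + 1)) ^ d * ∏ i : Fin d, (h i.succ + 1)) * n.choose (n / 2) := by gcongr
    _ = _ := by ring

theorem stmt_0_general (P : Type*) [PartialOrder P] [Finite P] :
    ∃ C : ℕ, ∀ {α : Type*} [Fintype α] (F : Finset (Finset α)), IsEmpty (P ↪o F) →
      #F ≤ C * (Fintype.card α).choose (Fintype.card α / 2) := by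
  rcases isEmpty_or_nonempty P with hP | hP
  · exact ⟨0, fun F hF => (hF.false (RelEmbedding.ofIsEmpty _ _)).elim⟩
  obtain ⟨d, hd⟩ := Nat.exists_eq_succ_of_ne_zero (Nat.card_pos (α := P)).ne'
  obtain ⟨C, hC⟩ := exists_card_filter_middle_le hd
  refine ⟨C + 4, fun F hF => (card_le_card_filter_middle_add F).trans ?_⟩
  rw [add_mul]
  exact Nat.add_le_add_right (hC F hF) _

lemma ContainsInduced.of_orderEmbedding {P : Type*} [PartialOrder P] {n : ℕ}
    {F : Finset (Finset (Fin n))} (f : P ↪o F) : ContainsInduced P F :=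
  ⟨fun p => f p, Subtype.val_injective.comp f.injective, fun p => (f p).2,
    fun _ _ => f.lt_iff_lt.symm⟩

/-- For every finite poset `P` there is a constant `C > 0` such that
for every `n`, every induced `P`-free family of subsets of `[n]` has size at most
`C * C(n, ⌊n/2⌋)`. -/
theorem stmt_0 (P : Type) [PartialOrder P] [Fintype P] :
    ∃ C : ℕ, 0 < C ∧ ∀ n : ℕ, ∀ F : Finset (Finset (Fin n)),
      ¬ ContainsInduced P F → F.card ≤ C * n.choose (n / 2) := by
  obtain ⟨C, hC⟩ := stmt_0_general P
  refine ⟨C + 1, C.succ_pos, fun n F hF => ?_⟩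
  have hcard := hC F ⟨fun f => hF (.of_orderEmbedding f)⟩
  rw [Fintype.card_fin] at hcard
  exact hcard.trans (Nat.mul_le_mul_right _ C.le_succ)
end

section
/- Let P be a finite poset on k elements of dimension at most d, where d ≥ 2. Then there exists a permutation d-matrix M_P of size k^d such that for every real K ≥ 0 the following holds: if for every n every M_P-free d-matrix of size n×⋯×n has at most K·n^{d−1} one-entries, then for every n, La#(n,P) ≤ 2^d · K · C(n, ⌊n/2⌋). -/
/-!
The matrix `M_P` has a `1` at the vector of ranks of `p` in the `d` linear orders, for each `p`.

Split `[n]` into `d` ordered parts of sizes `q j`, each `n / d` or `n / d + 1`. The sets meeting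
every part in an initial segment form a grid indexed by the product of the chains `{0, …, q j}`, and
inclusion between them is the coordinatewise order. Hence, for an induced `P`-free family `F`, the
0-1 matrix recording which sets of the grid lie in `F` is `M_P`-free, whatever the splitting, and
it has at most `K * s ^ (d - 1)` ones, where `s = n / d + 2`. On average over all splittings the
number of ones is `∑ A ∈ F, N |A| / n.choose |A|`, where `N m` is the number of grid points with
coordinate sum `m`.

The numbers `N m` decrease away from the middle `n / 2`: cutting a chain in two and reflecting one
piece writes `N m` as a sum of two such numbers for smaller products of chains. Counting the pairs
of a grid point and a larger value for one of its coordinates expresses `(n - m) * N m`, and by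
symmetry also `(m + 1) * N (m + 1)`, through the level sizes of smaller products of chains;
comparing the two shows that `N m / n.choose m` is minimal at `m = n / 2`. As `N (n / 2)` is at
least the average `∏ (q j + 1) / (n + 1)` of the `N m`, this gives
`|F| * ∏ (q j + 1) ≤ (n + 1) * n.choose (n / 2) * K * s ^ (d - 1)`, and
`(n + 1) * s ^ (d - 1) ≤ 2 ^ d * ∏ (q j + 1)` follows from Bernoulli's inequality.
-/

/-- Number of 1-entries of a 0-1 hypermatrix. -/
def ones {ι : Type*} [Fintype ι] [DecidableEq ι] {nn : ι → ℕ}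
    (M : (∀ j, Fin (nn j)) → Bool) : ℕ :=
  (Finset.univ.filter fun i => M i = true).card

/-- The hypermatrix `M` contains the hypermatrix `A`: there are strictly increasing
maps, one for each coordinate, sending 1-entries of `A` to 1-entries of `M`. -/
def MatContains {ι : Type*} {kk nn : ι → ℕ}
    (M : (∀ j, Fin (nn j)) → Bool) (A : (∀ j, Fin (kk j)) → Bool) : Prop :=
  ∃ f : ∀ j, Fin (kk j) → Fin (nn j), (∀ j, StrictMono (f j)) ∧
    ∀ i, A i = true → M (fun j => f j (i j)) = true

/-- A permutation d-matrix of size k^d: exactly `k` ones, and for each coordinate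
direction `j` and each value `v` there is exactly one 1-entry with j-th coordinate `v`. -/
def IsPermMatrix {d k : ℕ} (A : (Fin d → Fin k) → Bool) : Prop :=
  (Finset.univ.filter fun i => A i = true).card = k ∧
    ∀ (j : Fin d) (v : Fin k), ∃! i : Fin d → Fin k, A i = true ∧ i j = v

open Finset Function
open scoped Nat

section LevelSizes

variable {ι : Type*} [Fintype ι] [DecidableEq ι] {q : ι → ℕ} {m r t : ℕ} {j : ι}

/-- The elements of rank `m` in the product of the chains `{0, …, q j}`. -/
def level (q : ι → ℕ) (m : ℕ) : Finset (ι → ℕ) := {i ∈ Iic q | ∑ j, i j = m}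

lemma mem_level {i : ι → ℕ} : i ∈ level q m ↔ i ≤ q ∧ ∑ j, i j = m := by simp [level]

lemma level_eq_empty (h : ∑ j, q j < m) : level q m = ∅ := by
  refine eq_empty_of_forall_notMem fun i hi => ?_
  obtain ⟨hiq, rfl⟩ := mem_level.1 hi
  exact h.not_ge (sum_le_sum fun j _ => hiq j)

lemma tsub_mem_level {i : ι → ℕ} (hi : i ∈ level q m) : q - i ∈ level q (∑ j, q j - m) := by
  obtain ⟨hiq, rfl⟩ := mem_level.1 hi
  exact mem_level.2 ⟨tsub_le_self, sum_tsub_distrib _ fun j _ => hiq j⟩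

lemma card_filter_level_tsub (hm : m ≤ ∑ j, q j) (p : (ι → ℕ) → Prop) [DecidablePred p] :
    #{i ∈ level q (∑ j, q j - m) | p (q - i)} = #{i ∈ level q m | p i} := by
  have cancel {i : ι → ℕ} {m : ℕ} (hi : i ∈ level q m) : q - (q - i) = i :=
    tsub_tsub_cancel_of_le (mem_level.1 hi).1
  refine card_nbij' (q - ·) (q - ·) (fun i hi => ?_) (fun i hi => ?_)
    (fun i hi => cancel (mem_filter.1 hi).1) (fun i hi => cancel (mem_filter.1 hi).1)
  · have := tsub_mem_level (mem_filter.1 hi).1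
    rw [Nat.sub_sub_self hm] at this
    exact mem_filter.2 ⟨this, (mem_filter.1 hi).2⟩
  · have hi := mem_filter.1 hi
    exact mem_filter.2 ⟨tsub_mem_level hi.1, by simpa only [cancel hi.1] using hi.2⟩

lemma card_level_tsub (hm : m ≤ ∑ j, q j) : #(level q (∑ j, q j - m)) = #(level q m) := by
  simpa using card_filter_level_tsub hm fun _ => True

lemma sum_update_add {A : Type*} [AddCommMonoid A] (q : ι → A) (j : ι) (t : A) :
    ∑ l, update q j t l + q j = ∑ l, q l + t := by
  rw [sum_update_of_mem (mem_univ j), sdiff_singleton_eq_erase, add_assoc,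
    sum_erase_add _ _ (mem_univ j), add_comm]

lemma filter_level_apply_le (ht : t ≤ q j) :
    {i ∈ level q m | i j ≤ t} = level (update q j t) m := by
  ext i
  simp only [mem_filter, mem_level, Pi.le_def]
  grind

/-- The points with a large `j`-th coordinate are reflected to points with a small one. -/
lemma card_level_eq_add (ht : t < q j) (hm : m ≤ ∑ l, q l) :
    #(level q m)
      = #(level (update q j t) m) + #(level (update q j (q j - 1 - t)) (∑ l, q l - m)) := by
  have reflect : #{i ∈ level q m | ¬i j ≤ t}
      = #(level (update q j (q j - 1 - t)) (∑ l, q l - m)) := by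
    rw [← card_filter_level_tsub hm fun i => ¬i j ≤ t, ← filter_level_apply_le (by omega)]
    congr 1
    refine filter_congr fun i _ => ?_
    rw [Pi.sub_apply]
    omega
  calc #(level q m) = #{i ∈ level q m | i j ≤ t} + #{i ∈ level q m | ¬i j ≤ t} :=
        (card_filter_add_card_filter_not _).symm
    _ = _ := by rw [filter_level_apply_le ht.le, reflect]

/-- Rank `m` is at least as close to the middle as rank `r`. Split level `r` into the points with
`i j = 0` and the others, and level `m` into the points with `i j = q j` and the others; after
reflections, the pieces are compared by induction. -/
lemma card_level_le_card_level (hmr : m ≤ r) (hq : ∑ j, q j ≤ m + r) :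
    #(level q r) ≤ #(level q m) := by
  induction hc : ∑ j, q j using Nat.strong_induction_on generalizing q m r with
  | _ c ih =>
    subst hc
    obtain rfl | hlt := hmr.eq_or_lt
    · exact le_rfl
    obtain hr | hr := lt_or_ge (∑ j, q j) r
    · simp [level_eq_empty hr]
    obtain ⟨j, -, hj⟩ : ∃ j ∈ univ, q j ≠ 0 := exists_ne_zero_of_sum_ne_zero (by omega)
    have sum_bot := sum_update_add q j 0
    have sum_pred := sum_update_add q j (q j - 1)
    have reflect : #(level (update q j (q j - 1)) (∑ l, q l - r))
        = #(level (update q j (q j - 1)) (r - 1)) := by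
      rw [← card_level_tsub (by omega : r - 1 ≤ ∑ l, update q j (q j - 1) l)]
      congr 2
      omega
    calc #(level q r)
        = #(level (update q j 0) r) + #(level (update q j (q j - 1)) (r - 1)) := by
          rw [card_level_eq_add (by omega : 0 < q j) hr, Nat.sub_zero, reflect]
      _ ≤ #(level (update q j 0) (∑ l, q l - m)) + #(level (update q j (q j - 1)) m) := by
          gcongr ?_ + ?_
          · exact ih _ (by omega) (q := update q j 0) (by omega) (by omega) rfl
          · exact ih _ (by omega) (q := update q j (q j - 1)) (by omega) (by omega) rfl
      _ = #(level q m) := by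
          rw [card_level_eq_add (by omega : q j - 1 < q j) (by omega : m ≤ ∑ l, q l),
            Nat.sub_self, add_comm]

lemma card_level_le_card_level_half (q : ι → ℕ) (m : ℕ) :
    #(level q m) ≤ #(level q ((∑ j, q j) / 2)) := by
  obtain h | rfl | h := lt_trichotomy m ((∑ j, q j) / 2)
  · rw [← card_level_tsub (by omega : m ≤ ∑ j, q j)]
    exact card_level_le_card_level (by omega) (by omega)
  · exact le_rfl
  · exact card_level_le_card_level h.le (by omega)

/-- Both sides count the pairs of a point of rank `m` and an element `t ≥ i j` of `{0, …, q j - 1}`,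
for some `j`. -/
lemma sum_tsub_mul_card_level (q : ι → ℕ) (m : ℕ) :
    (∑ j, q j - m) * #(level q m) = ∑ j, ∑ t ∈ range (q j), #(level (update q j t) m) := by
  have corank {i : ι → ℕ} (hi : i ∈ level q m) :
      ∑ j, q j - m = ∑ j, #{t ∈ range (q j) | i j ≤ t} := by
    obtain ⟨hiq, rfl⟩ := mem_level.1 hi
    rw [← sum_tsub_distrib _ fun j _ => hiq j]
    refine sum_congr rfl fun j _ => ?_
    rw [← Nat.card_Ico]
    congr 1
    grind
  calc (∑ j, q j - m) * #(level q m)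
      = ∑ i ∈ level q m, ∑ j, #{t ∈ range (q j) | i j ≤ t} := by
        rw [mul_comm, ← smul_eq_mul, ← sum_const]
        exact sum_congr rfl fun i => corank
    _ = ∑ j, ∑ t ∈ range (q j), #{i ∈ level q m | i j ≤ t} := by
        rw [sum_comm]
        exact sum_congr rfl fun j _ => sum_card_bipartiteAbove_eq_sum_card_bipartiteBelow _
    _ = _ := sum_congr rfl fun j _ => sum_congr rfl fun t ht => by
        rw [filter_level_apply_le (mem_range.1 ht).le]

/-- By `sum_tsub_mul_card_level` applied to the reflection of rank `m + 1` and to rank `m`, it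
suffices to compare these two ranks in smaller products of chains, where the first one is farther
from the middle. -/
lemma succ_mul_card_level_succ_le (hm : 2 * m + 1 ≤ ∑ j, q j) :
    (m + 1) * #(level q (m + 1)) ≤ (∑ j, q j - m) * #(level q m) := by
  calc (m + 1) * #(level q (m + 1))
      = (∑ j, q j - (∑ j, q j - (m + 1))) * #(level q (∑ j, q j - (m + 1))) := by
        rw [card_level_tsub (by omega), Nat.sub_sub_self (by omega)]
    _ ≤ (∑ j, q j - m) * #(level q m) := by
        rw [sum_tsub_mul_card_level, sum_tsub_mul_card_level]
        refine sum_le_sum fun j _ => sum_le_sum fun t ht => ?_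
        have := sum_update_add q j t
        have := mem_range.1 ht
        exact card_level_le_card_level (q := update q j t) (by omega) (by omega)

lemma card_level_succ_mul_choose_le (hm : 2 * m + 1 ≤ ∑ j, q j) :
    #(level q (m + 1)) * (∑ j, q j).choose m ≤ #(level q m) * (∑ j, q j).choose (m + 1) := by
  refine Nat.le_of_mul_le_mul_right ?_ m.succ_pos
  calc #(level q (m + 1)) * (∑ j, q j).choose m * (m + 1)
      = (m + 1) * #(level q (m + 1)) * (∑ j, q j).choose m := by ring
    _ ≤ (∑ j, q j - m) * #(level q m) * (∑ j, q j).choose m := by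
        gcongr ?_ * _
        exact succ_mul_card_level_succ_le hm
    _ = #(level q m) * ((∑ j, q j).choose m * (∑ j, q j - m)) := by ring
    _ = #(level q m) * (∑ j, q j).choose (m + 1) * (m + 1) := by
        rw [← Nat.choose_succ_right_eq, mul_assoc]

lemma card_level_mul_choose_le (hmr : m ≤ r) (hr : 2 * r ≤ ∑ j, q j) :
    #(level q r) * (∑ j, q j).choose m ≤ #(level q m) * (∑ j, q j).choose r := by
  induction r, hmr using Nat.le_induction with
  | base => exact le_rfl
  | succ r _ ih =>
    have hpos : 0 < (∑ j, q j).choose r := Nat.choose_pos (by omega)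
    refine Nat.le_of_mul_le_mul_right ?_ hpos
    calc #(level q (r + 1)) * (∑ j, q j).choose m * (∑ j, q j).choose r
        = #(level q (r + 1)) * (∑ j, q j).choose r * (∑ j, q j).choose m := by ring
      _ ≤ #(level q r) * (∑ j, q j).choose (r + 1) * (∑ j, q j).choose m := by
          gcongr ?_ * _
          exact card_level_succ_mul_choose_le (by omega)
      _ = #(level q r) * (∑ j, q j).choose m * (∑ j, q j).choose (r + 1) := by ring
      _ ≤ #(level q m) * (∑ j, q j).choose r * (∑ j, q j).choose (r + 1) := by
          gcongr ?_ * _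
          exact ih (by omega)
      _ = #(level q m) * (∑ j, q j).choose (r + 1) * (∑ j, q j).choose r := by ring

lemma card_level_half_mul_choose_le (hm : m ≤ ∑ j, q j) :
    #(level q ((∑ j, q j) / 2)) * (∑ j, q j).choose m
      ≤ #(level q m) * (∑ j, q j).choose ((∑ j, q j) / 2) := by
  obtain h | h := le_or_gt m ((∑ j, q j) / 2)
  · exact card_level_mul_choose_le h (by omega)
  · rw [← card_level_tsub hm, ← Nat.choose_symm hm]
    exact card_level_mul_choose_le (by omega) (by omega)

lemma prod_add_one_le_mul_card_level_half (q : ι → ℕ) :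
    ∏ j, (q j + 1) ≤ (∑ j, q j + 1) * #(level q ((∑ j, q j) / 2)) := by
  have maps : ∀ i ∈ Iic q, ∑ j, i j ∈ range (∑ j, q j + 1) := fun i hi =>
    mem_range_succ_iff.2 (sum_le_sum fun j _ => mem_Iic.1 hi j)
  calc ∏ j, (q j + 1) = #(Iic q) := by simp [Pi.card_Iic]
    _ = ∑ m ∈ range (∑ j, q j + 1), #(level q m) := card_eq_sum_card_fiberwise maps
    _ ≤ (∑ j, q j + 1) * #(level q ((∑ j, q j) / 2)) := by
        simpa using sum_le_card_nsmul (range (∑ j, q j + 1)) _ _ fun m _ =>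
          card_level_le_card_level_half q m

/-- The proportion of the `m`-subsets of a set with `∑ j, q j` elements that the level `m` of a
product of chains can supply is smallest at the middle level, which is also a largest one. -/
lemma prod_add_one_mul_choose_le (hm : m ≤ ∑ j, q j) :
    (∏ j, (q j + 1)) * (∑ j, q j).choose m
      ≤ (∑ j, q j + 1) * (∑ j, q j).choose ((∑ j, q j) / 2) * #(level q m) :=
  calc (∏ j, (q j + 1)) * (∑ j, q j).choose m
      ≤ (∑ j, q j + 1) * #(level q ((∑ j, q j) / 2)) * (∑ j, q j).choose m := by
        gcongr
        exact prod_add_one_le_mul_card_level_half q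
    _ = (∑ j, q j + 1) * (#(level q ((∑ j, q j) / 2)) * (∑ j, q j).choose m) := by ring
    _ ≤ (∑ j, q j + 1) * (#(level q m) * (∑ j, q j).choose ((∑ j, q j) / 2)) := by
        gcongr _ * ?_
        exact card_level_half_mul_choose_le hm
    _ = _ := by ring

end LevelSizes

section Grid

variable {ι : Type*} [Fintype ι] {q i k : ι → ℕ}

/-- The set `Σ j, Fin (q j)` is split into ordered parts of sizes `q j`; `gridSet q i` consists of
the first `i j` elements of the part `j`, for every `j`. -/
def gridSet (q i : ι → ℕ) : Finset (Σ j, Fin (q j)) :=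
  univ.sigma fun j => {a : Fin (q j) | (a : ℕ) < i j}

lemma mem_gridSet {x : Σ j, Fin (q j)} : x ∈ gridSet q i ↔ (x.2 : ℕ) < i x.1 := by
  simp [gridSet]

lemma card_gridSet (hi : i ≤ q) : #(gridSet q i) = ∑ j, i j := by
  rw [gridSet, card_sigma]
  exact sum_congr rfl fun j _ => by rw [Fin.card_filter_val_lt, min_eq_right (hi j)]

lemma gridSet_subset_gridSet (hi : i ≤ q) : gridSet q i ⊆ gridSet q k ↔ i ≤ k := by
  refine ⟨fun h j => ?_, fun h x hx => mem_gridSet.2 ((mem_gridSet.1 hx).trans_le (h x.1))⟩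
  by_contra! hlt
  have hmem : (⟨j, ⟨k j, hlt.trans_le (hi j)⟩⟩ : Σ j, Fin (q j)) ∈ gridSet q i :=
    mem_gridSet.2 hlt
  exact lt_irrefl _ (mem_gridSet.1 (h hmem))

end Grid

section Averaging

lemma map_equiv_eq_iff {α β : Type*} {s : Finset α} {t : Finset β} {e : α ≃ β} :
    s.map e.toEmbedding = t ↔ ∀ a, a ∈ s ↔ e a ∈ t := by
  rw [Finset.ext_iff, e.symm.forall_congr_left]
  simp

/-- A bijection of `β` with `Fin (card α)` that maps `t` to an initial segment turns the bijections
mapping `s` to `t` into the numberings of `α` that begin with `s`. -/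
lemma card_filter_map_equiv_eq {α β : Type*} [Fintype α] [DecidableEq α] [Fintype β]
    [DecidableEq β] (h : Fintype.card α = Fintype.card β) {s : Finset α} {t : Finset β}
    (hst : #s = #t) :
    #{e : α ≃ β | s.map e.toEmbedding = t} = (#t)! * (Fintype.card β - #t)! := by
  obtain ⟨τ, hτ⟩ : (Numbering.prefixed t).Nonempty :=
    card_pos.1 (by rw [Numbering.card_prefixed]; positivity)
  rw [← h, ← hst, ← Numbering.card_prefixed s]
  refine card_equiv (Equiv.equivCongr (.refl α) (τ.trans (finCongr h.symm))) fun e => ?_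
  simp [map_equiv_eq_iff, Numbering.IsPrefix, hst, Numbering.mem_prefixed.1 hτ _]

variable {ι β : Type*} [Fintype ι] [DecidableEq ι] [Fintype β] [DecidableEq β] {q : ι → ℕ}

lemma sum_card_filter_map_gridSet_mem (hq : ∑ j, q j = Fintype.card β)
    (F : Finset (Finset β)) :
    ∑ e : (Σ j, Fin (q j)) ≃ β, #{i ∈ Iic q | (gridSet q i).map e.toEmbedding ∈ F}
      = ∑ A ∈ F, #(level q #A) * ((#A)! * (Fintype.card β - #A)!) := by
  have fiber (A : Finset β) {i : ι → ℕ} (hi : i ∈ Iic q) :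
      #{e : (Σ j, Fin (q j)) ≃ β | (gridSet q i).map e.toEmbedding = A}
        = if ∑ j, i j = #A then (#A)! * (Fintype.card β - #A)! else 0 := by
    rw [← card_gridSet (mem_Iic.1 hi)]
    split_ifs with h
    · exact card_filter_map_equiv_eq (by simpa using hq) h
    · refine card_eq_zero.2 (filter_eq_empty_iff.2 fun e _ he => h ?_)
      rw [← he, card_map]
  calc _ = ∑ e : (Σ j, Fin (q j)) ≃ β, ∑ A ∈ F,
          #{i ∈ Iic q | (gridSet q i).map e.toEmbedding = A} := by
        refine sum_congr rfl fun e _ => (card_eq_sum_card_fiberwise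
          fun i hi => (mem_filter.1 hi).2).trans (sum_congr rfl fun A hA => ?_)
        rw [filter_filter]
        congr 1
        exact filter_congr fun i _ => and_iff_right_of_imp fun h => h ▸ hA
    _ = ∑ A ∈ F, ∑ i ∈ Iic q,
          #{e : (Σ j, Fin (q j)) ≃ β | (gridSet q i).map e.toEmbedding = A} := by
        rw [sum_comm]
        exact sum_congr rfl fun A _ => sum_card_bipartiteAbove_eq_sum_card_bipartiteBelow _
    _ = _ := sum_congr rfl fun A _ => by
        rw [sum_congr rfl fun i => fiber A, ← sum_filter, sum_const, smul_eq_mul, level]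

lemma exists_equiv_prod_mul_card_le (hq : ∑ j, q j = Fintype.card β) (F : Finset (Finset β)) :
    ∃ e : (Σ j, Fin (q j)) ≃ β, (∏ j, (q j + 1)) * #F
      ≤ (∑ j, q j + 1) * (∑ j, q j).choose ((∑ j, q j) / 2)
        * #{i ∈ Iic q | (gridSet q i).map e.toEmbedding ∈ F} := by
  let e₀ : (Σ j, Fin (q j)) ≃ β := Fintype.equivOfCardEq (by simpa using hq)
  suffices h : ∑ _e : (Σ j, Fin (q j)) ≃ β, (∏ j, (q j + 1)) * #F
      ≤ ∑ e : (Σ j, Fin (q j)) ≃ β, (∑ j, q j + 1) * (∑ j, q j).choose ((∑ j, q j) / 2)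
        * #{i ∈ Iic q | (gridSet q i).map e.toEmbedding ∈ F} by
    obtain ⟨e, -, he⟩ := exists_le_of_sum_le ⟨e₀, mem_univ e₀⟩ h
    exact ⟨e, he⟩
  have weight_le {A : Finset β} : (∏ j, (q j + 1)) * (Fintype.card β)!
      ≤ (∑ j, q j + 1) * (∑ j, q j).choose ((∑ j, q j) / 2)
        * (#(level q #A) * ((#A)! * (Fintype.card β - #A)!)) := by
    rw [← Nat.choose_mul_factorial_mul_factorial A.card_le_univ, ← hq, mul_assoc (Nat.choose _ _),
      ← mul_assoc, ← mul_assoc _ #(level q #A)]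
    gcongr ?_ * _
    exact prod_add_one_mul_choose_le (hq ▸ A.card_le_univ)
  calc ∑ _e : (Σ j, Fin (q j)) ≃ β, (∏ j, (q j + 1)) * #F
      = ∑ _A ∈ F, (∏ j, (q j + 1)) * (Fintype.card β)! := by
        rw [sum_const, sum_const, card_univ, Fintype.card_equiv e₀, Fintype.card_congr e₀,
          smul_eq_mul, smul_eq_mul]
        ring
    _ ≤ _ := sum_le_sum fun A _ => weight_le
    _ = _ := by rw [← mul_sum, ← sum_card_filter_map_gridSet_mem hq, mul_sum]

end Averaging

section BalancedParts

lemma exists_sum_eq_and_div_le {d : ℕ} (hd : 0 < d) (n : ℕ) :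
    ∃ q : Fin d → ℕ, ∑ j, q j = n ∧ ∀ j, n / d ≤ q j ∧ q j ≤ n / d + 1 := by
  refine ⟨fun j => n / d + if j < n % d then 1 else 0, ?_,
    fun j => by dsimp only; split_ifs <;> simp⟩
  rw [sum_add_distrib, sum_boole, Fin.card_filter_val_lt, min_eq_right (Nat.mod_lt n hd).le]
  simpa using Nat.div_add_mod n d

/-- Bernoulli's inequality `1 + ∑ z j / c ≤ ∏ (1 + z j / c)`, with denominators cleared. -/
lemma pow_card_mul_add_sum_le {ι R : Type*} [CommSemiring R] [PartialOrder R] [IsOrderedRing R]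
    (S : Finset ι) {c : R} (hc : 0 ≤ c) {z : ι → R} (hz : ∀ j ∈ S, 0 ≤ z j) :
    c ^ #S * (c + ∑ j ∈ S, z j) ≤ c * ∏ j ∈ S, (c + z j) := by
  classical
  induction S using Finset.induction_on with
  | empty => simp
  | insert a S ha ih =>
    obtain ⟨hza, hzS⟩ := (forall_mem_insert _ _ _).1 hz
    have ih := ih hzS
    have pow_le_prod : c ^ #S ≤ ∏ j ∈ S, (c + z j) := by
      rw [← prod_const]
      exact prod_le_prod (fun _ _ => hc) fun j hj => le_add_of_nonneg_right (hzS j hj)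
    calc c ^ #(insert a S) * (c + ∑ j ∈ insert a S, z j)
        = c * (c ^ #S * (c + ∑ j ∈ S, z j)) + c * (c ^ #S * z a) := by
          rw [card_insert_of_notMem ha, sum_insert ha]
          ring
      _ ≤ c * (c * ∏ j ∈ S, (c + z j)) + c * ((∏ j ∈ S, (c + z j)) * z a) := by
          gcongr
      _ = c * ∏ j ∈ insert a S, (c + z j) := by
          rw [prod_insert ha]
          ring

lemma div_add_two_pow_mul_succ_le {d n : ℕ} (hd : 0 < d) {q : Fin d → ℕ} (hq : ∑ j, q j = n)
    (hdiv : ∀ j, n / d ≤ q j) :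
    (n / d + 2) ^ (d - 1) * (n + 1) ≤ 2 ^ d * ∏ j, (q j + 1) := by
  set s := n / d + 2 with hs
  have hs_pos : 0 < (s : ℤ) := by positivity
  have hs_mul : (d * s : ℤ) ≤ n + d * 2 := by
    have : d * s ≤ n + d * 2 := by
      rw [hs, mul_add]
      gcongr
      exact Nat.mul_div_le n d
    exact_mod_cast this
  have excess_nonneg (j : Fin d) : 0 ≤ 2 * (q j + 1 : ℤ) - s := by
    have : s ≤ 2 * (q j + 1) := by linarith [hdiv j, hs]
    omega
  have sum_excess : ∑ j, (2 * (q j + 1 : ℤ) - s) = 2 * (n + d) - d * s := by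
    simp [← hq, sum_sub_distrib, ← mul_sum, sum_add_distrib]
  have bernoulli := pow_card_mul_add_sum_le univ hs_pos.le fun j _ => excess_nonneg j
  rw [card_fin, sum_excess] at bernoulli
  suffices h : (s : ℤ) * (s ^ (d - 1) * (n + 1)) ≤ s * (2 ^ d * ∏ j, (q j + 1 : ℤ)) by
    exact_mod_cast le_of_mul_le_mul_left h hs_pos
  calc (s : ℤ) * (s ^ (d - 1) * (n + 1)) = s ^ d * (n + 1) := by
        rw [← mul_assoc, mul_pow_sub_one hd.ne']
    _ ≤ s ^ d * (s + (2 * (n + d) - d * s)) := by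
        gcongr _ * ?_
        linarith
    _ ≤ s * ∏ j, (s + (2 * (q j + 1 : ℤ) - s)) := bernoulli
    _ = s * (2 ^ d * ∏ j, (q j + 1 : ℤ)) := by simp [prod_mul_distrib]

end BalancedParts

section Ranks

lemma exists_equiv_fin_lt_iff {P : Type*} [Fintype P] {k : ℕ} (hk : Fintype.card P = k)
    (L : LinearOrder P) : ∃ ρ : P ≃ Fin k, ∀ x y, L.lt x y ↔ ρ x < ρ y :=
  let o := Fintype.orderIsoFinOfCardEq P hk
  ⟨o.symm.toEquiv, fun _ _ => o.symm.lt_iff_lt.symm⟩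

lemma exists_rank_orderEmbedding {ι P : Type*} [PartialOrder P] [Fintype P] {k : ℕ}
    (hk : Fintype.card P = k) {L : ι → LinearOrder P}
    (hL : ∀ x y : P, x < y ↔ ∀ j, (L j).lt x y) :
    ∃ r : P ↪o (ι → Fin k), ∀ j, Bijective (r · j) := by
  choose ρ hρ using fun j => exists_equiv_fin_lt_iff hk (L j)
  have lt_iff {x y : P} : x < y ↔ ∀ j, ρ j x < ρ j y := by simp only [hL, hρ]
  refine ⟨.ofMapLEIff (fun p j => ρ j p) fun x y => ⟨fun h => ?_, fun h => ?_⟩,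
    fun j => (ρ j).bijective⟩
  · by_contra hxy
    have hne : x ≠ y := fun h => hxy h.le
    exact hxy (lt_iff.2 fun j => (h j).lt_of_ne ((ρ j).injective.ne hne)).le
  · obtain rfl | hlt := h.eq_or_lt
    · exact le_rfl
    · exact fun j => (lt_iff.1 hlt j).le

end Ranks

section Matrices

variable {ι P : Type*} [Fintype ι] {k n s : ℕ} {q : ι → ℕ}

/-- The 0-1 matrix whose 1-entries are the points `r p`. For `r p` the vector of the ranks of `p` in
the linear orders, this is the permutation matrix `M_P`. -/
def pointMatrix [Fintype P] (r : P → ι → Fin k) (i : ι → Fin k) : Bool :=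
  decide (∃ p, r p = i)

lemma isPermMatrix_pointMatrix {d : ℕ} [Fintype P] (hk : Fintype.card P = k)
    {r : P → Fin d → Fin k} (hr : Injective r) (hr_coord : ∀ j, Bijective (r · j)) :
    IsPermMatrix (pointMatrix r) := by
  refine ⟨?_, fun j v => ?_⟩
  · refine Eq.trans ?_ ((card_image_of_injective univ hr).trans hk)
    congr 1
    ext i
    simp [pointMatrix]
  · obtain ⟨p, rfl⟩ := (hr_coord j).surjective v
    refine ⟨r p, ⟨decide_eq_true ⟨p, rfl⟩, rfl⟩, ?_⟩
    rintro i ⟨hi, hij⟩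
    obtain ⟨p₁, rfl⟩ := of_decide_eq_true hi
    rw [(hr_coord j).injective hij]

/-- The 0-1 matrix recording which grid sets are mapped to members of `F` by `e`. Its side `s` may
exceed the sides `q j + 1` of the grid; the entries outside the grid are `0`. -/
def gridMatrix (s : ℕ) (q : ι → ℕ) (e : (Σ j, Fin (q j)) ≃ Fin n) (F : Finset (Finset (Fin n)))
    (i : ι → Fin s) : Bool :=
  decide ((∀ j, (i j : ℕ) ≤ q j) ∧ (gridSet q fun j => i j).map e.toEmbedding ∈ F)

lemma ones_gridMatrix [DecidableEq ι] (hs : ∀ j, q j < s) (e : (Σ j, Fin (q j)) ≃ Fin n)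
    (F : Finset (Finset (Fin n))) :
    ones (gridMatrix s q e F) = #{i ∈ Iic q | (gridSet q i).map e.toEmbedding ∈ F} := by
  refine card_nbij (fun i j => i j) (fun i hi => ?_) (fun i _ l _ h => ?_) (fun i hi => ?_)
  · simpa [gridMatrix, Pi.le_def] using hi
  · exact funext fun j => Fin.ext (congrFun h j)
  · have hi := mem_filter.1 hi
    refine ⟨fun j => ⟨i j, (mem_Iic.1 hi.1 j).trans_lt (hs j)⟩, ?_, rfl⟩
    simpa [gridMatrix, Pi.le_def] using hi

lemma containsInduced_of_matContains [PartialOrder P] [Fintype P] {r : P ↪o (ι → Fin k)}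
    {e : (Σ j, Fin (q j)) ≃ Fin n} {F : Finset (Finset (Fin n))}
    (h : MatContains (gridMatrix s q e F) (pointMatrix r)) : ContainsInduced P F := by
  obtain ⟨f, hf, hM⟩ := h
  have mem_F (p : P) : (∀ j, (f j (r p j) : ℕ) ≤ q j)
      ∧ (gridSet q fun j => f j (r p j)).map e.toEmbedding ∈ F :=
    of_decide_eq_true (hM (r p) (decide_eq_true ⟨p, rfl⟩))
  let α : P ↪o Finset (Fin n) :=
    .ofMapLEIff (fun p => (gridSet q fun j => f j (r p j)).map e.toEmbedding) fun x y => by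
      rw [map_subset_map, gridSet_subset_gridSet (mem_F x).1, ← r.le_iff_le,
        Pi.le_def, Pi.le_def]
      exact forall_congr' fun j => (hf j).le_iff_le
  exact ⟨α, α.injective, fun p => (mem_F p).2, fun x y => α.lt_iff_lt.symm⟩

end Matrices

/-- The side `n / d + 2` accommodates the grid given by `d` parts of `[n]` of sizes at most
`n / d + 1`. -/
theorem stmt_1_general {d k : ℕ} (hd : 0 < d) {P : Type*} [PartialOrder P] [Fintype P]
    (hk : Fintype.card P = k)
    (hdim : ∃ L : Fin d → LinearOrder P, ∀ x y : P, x < y ↔ ∀ j, (L j).lt x y) :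
    ∃ MP : (Fin d → Fin k) → Bool, IsPermMatrix MP ∧
      ∀ (n : ℕ) (K : ℝ),
        (∀ M : (Fin d → Fin (n / d + 2)) → Bool,
          ¬ MatContains M MP → (ones M : ℝ) ≤ K * ((n / d + 2 : ℕ) : ℝ) ^ (d - 1)) →
        ∀ F : Finset (Finset (Fin n)), ¬ ContainsInduced P F →
          (F.card : ℝ) ≤ 2 ^ d * K * (n.choose (n / 2)) := by
  obtain ⟨L, hL⟩ := hdim
  obtain ⟨r, hr⟩ := exists_rank_orderEmbedding hk hL
  refine ⟨pointMatrix r, isPermMatrix_pointMatrix hk r.injective hr, fun n K hM F hF => ?_⟩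
  obtain ⟨q, hqn, hq⟩ := exists_sum_eq_and_div_le hd n
  obtain ⟨e, average⟩ := exists_equiv_prod_mul_card_le (by simpa using hqn) F
  rw [hqn, ← ones_gridMatrix (s := n / d + 2) (fun j => Nat.lt_succ_of_le (hq j).2)] at average
  have free := hM (gridMatrix (n / d + 2) q e F) fun h => hF (containsInduced_of_matContains h)
  have hK : 0 ≤ K := nonneg_of_mul_nonneg_left ((Nat.cast_nonneg _).trans free) (by positivity)
  have size := div_add_two_pow_mul_succ_le hd hqn fun j => (hq j).1
  have prod_pos : (0 : ℝ) < (∏ j, (q j + 1) : ℕ) := by positivity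
  refine le_of_mul_le_mul_left ?_ prod_pos
  calc ((∏ j, (q j + 1) : ℕ) : ℝ) * #F
      ≤ (n + 1) * n.choose (n / 2) * ones (gridMatrix (n / d + 2) q e F) := by
        exact_mod_cast average
    _ ≤ (n + 1) * n.choose (n / 2) * (K * ((n / d + 2 : ℕ) : ℝ) ^ (d - 1)) := by gcongr
    _ = K * n.choose (n / 2) * (((n / d + 2) ^ (d - 1) * (n + 1) : ℕ) : ℝ) := by
        push_cast
        ring
    _ ≤ K * n.choose (n / 2) * ((2 ^ d * ∏ j, (q j + 1) : ℕ) : ℝ) := by gcongr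
    _ = (∏ j, (q j + 1) : ℕ) * (2 ^ d * K * n.choose (n / 2)) := by
        push_cast
        ring

/-- For a finite poset `P` on `k` elements of dimension at most `d` (`d ≥ 2`),
there is a permutation d-matrix `M_P` of size `k^d` such that for every `K ≥ 0`: if every
`M_P`-free d-matrix of size `n^d` has at most `K·n^(d−1)` ones (for every `n`), then
`La#(n,P) ≤ 2^d · K · C(n, ⌊n/2⌋)` for every `n`. -/
theorem stmt_1 (d k : ℕ) (hd : 2 ≤ d) (P : Type) [PartialOrder P] [Fintype P]
    (hk : Fintype.card P = k)
    (hdim : ∃ L : Fin d → LinearOrder P, ∀ x y : P, x < y ↔ ∀ j, (L j).lt x y) :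
    ∃ MP : (Fin d → Fin k) → Bool, IsPermMatrix MP ∧
      ∀ K : ℝ, 0 ≤ K →
        (∀ n : ℕ, ∀ M : (Fin d → Fin n) → Bool,
          ¬ MatContains M MP → (ones M : ℝ) ≤ K * (n : ℝ) ^ (d - 1)) →
        ∀ n : ℕ, ∀ F : Finset (Finset (Fin n)), ¬ ContainsInduced P F →
          (F.card : ℝ) ≤ 2 ^ d * K * (n.choose (n / 2)) := by
  obtain ⟨MP, hMP, h⟩ := stmt_1_general (by omega) hk hdim
  exact ⟨MP, hMP, fun K _ hM n => h n K (hM _)⟩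
end

section
/- Let d ≥ 1, let A be a d-matrix, and let K be a nonnegative real. If ex_d(n,A) ≤ K·n^{d−1} for every positive integer n, then for all positive integers n₁,…,n_d we have ex_d(n₁×⋯×n_d, A) ≤ K · (n₁⋯n_d)/(min_{1≤i≤d} n_i). -/
/-- The extremal number: the maximum number of 1-entries of an `A`-free
hypermatrix of size `nn`. -/
noncomputable def exd {ι : Type*} [Fintype ι] [DecidableEq ι] (nn : ι → ℕ) {kk : ι → ℕ}
    (A : (∀ j, Fin (kk j)) → Bool) : ℕ :=
  sSup {m : ℕ | ∃ M : (∀ j, Fin (nn j)) → Bool, ¬ MatContains M A ∧ ones M = m}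

/-!
The density `ex(n, A) / ∏ n_j` can only grow when every side `n_j` is shortened to some `m_j ≤ n_j`.
Place a box of shape `m` at a uniformly random cyclic position in an extremal `A`-free matrix `M`.
Every cell is covered with the same probability, so some position sees at least the density of `M`;
and although the box may wrap around, listing its indices in increasing order gives a submatrix of
`M`, which is again `A`-free. Shortening all sides to `m = min n_j` gives
`ex(n, A) ≤ (∏ n_j) * ex(m, …, m, A) / m ^ d`.
-/

/-- The cyclic interval `{t, t + 1, …, t + m - 1}` of indices modulo `N`; it is everything if
`N ≤ m`. Encoding it through `i - t`, computed in `Fin N`, makes the roles of the starting point `t`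
and the member `i` symmetric. -/
def cyclicInterval {N : ℕ} (m : ℕ) (t : Fin N) : Finset (Fin N) :=
  {i | (i - t).val < m}

theorem card_cyclicInterval {N : ℕ} (m : ℕ) (t : Fin N) : (cyclicInterval m t).card = min N m := by
  have : NeZero N := ⟨(Fin.pos t).ne'⟩
  rw [← Fin.card_filter_val_lt]
  exact Finset.card_equiv (Equiv.subRight t) (by simp [cyclicInterval])

theorem card_filter_mem_cyclicInterval {N : ℕ} (m : ℕ) (i : Fin N) :
    (Finset.univ.filter fun t => i ∈ cyclicInterval m t).card = min N m := by
  have : NeZero N := ⟨(Fin.pos i).ne'⟩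
  rw [← Fin.card_filter_val_lt]
  exact Finset.card_equiv (Equiv.subLeft i) (by simp [cyclicInterval])

theorem MatContains.of_submatrix {ι : Type*} {kk mm nn : ι → ℕ} {A : (∀ j, Fin (kk j)) → Bool}
    {M : (∀ j, Fin (nn j)) → Bool} {e : ∀ j, Fin (mm j) → Fin (nn j)} (he : ∀ j, StrictMono (e j))
    (h : MatContains (fun i => M fun j => e j (i j)) A) : MatContains M A :=
  let ⟨f, hf, hA⟩ := h
  ⟨fun j => e j ∘ f j, fun j => (he j).comp (hf j), hA⟩

section ExtremalNumber

variable {ι : Type*} [Fintype ι] [DecidableEq ι] {kk nn : ι → ℕ} {A : (∀ j, Fin (kk j)) → Bool}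
  {M : (∀ j, Fin (nn j)) → Bool}

theorem bddAbove_ones_of_not_matContains (nn : ι → ℕ) (A : (∀ j, Fin (kk j)) → Bool) :
    BddAbove {m : ℕ | ∃ M : (∀ j, Fin (nn j)) → Bool, ¬ MatContains M A ∧ ones M = m} := by
  refine ⟨Fintype.card (∀ j, Fin (nn j)), ?_⟩
  rintro _ ⟨M, -, rfl⟩
  exact Finset.card_le_univ _

theorem ones_le_exd (hM : ¬ MatContains M A) : ones M ≤ exd nn A :=
  le_csSup (bddAbove_ones_of_not_matContains nn A) ⟨M, hM, rfl⟩

/-- The first alternative covers the junk value of `exd` when every matrix contains `A`. -/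
theorem exd_eq_zero_or_exists_ones_eq (nn : ι → ℕ) (A : (∀ j, Fin (kk j)) → Bool) :
    exd nn A = 0 ∨ ∃ M : (∀ j, Fin (nn j)) → Bool, ¬ MatContains M A ∧ ones M = exd nn A := by
  rcases Set.eq_empty_or_nonempty
    {m : ℕ | ∃ M : (∀ j, Fin (nn j)) → Bool, ¬ MatContains M A ∧ ones M = m} with hempty | hne
  · exact .inl (by rw [exd, hempty, csSup_empty, bot_eq_zero])
  · exact .inr (Nat.sSup_mem hne (bddAbove_ones_of_not_matContains nn A))

theorem card_ones_filter_mem_piFinset_le_exd (hM : ¬ MatContains M A)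
    (S : ∀ j, Finset (Fin (nn j))) :
    (Finset.univ.filter fun i => M i = true ∧ i ∈ Fintype.piFinset S).card ≤
      exd (fun j => (S j).card) A := by
  let e : ∀ j, Fin (S j).card ↪o Fin (nn j) := fun j => (S j).orderEmbOfFin rfl
  have hfree : ¬ MatContains (fun i => M fun j => e j (i j)) A :=
    fun h => hM (h.of_submatrix fun j => (e j).strictMono)
  refine le_trans (Finset.card_le_card_of_surjOn (fun i j => e j (i j)) ?_) (ones_le_exd hfree)
  intro i hi
  obtain ⟨hMi, hiS⟩ : M i = true ∧ ∀ j, i j ∈ S j := by simpa using hi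
  have hrange : ∀ j, i j ∈ Set.range (e j) := fun j => by
    simpa only [e, Finset.range_orderEmbOfFin, Finset.mem_coe] using hiS j
  choose x hx using hrange
  exact ⟨x, by simpa [hx] using hMi, funext hx⟩

theorem ones_mul_prod_le_prod_mul_exd (hM : ¬ MatContains M A) {mm : ι → ℕ} (hmn : mm ≤ nn) :
    ones M * ∏ j, mm j ≤ (∏ j, nn j) * exd mm A := by
  let box (t : ∀ j, Fin (nn j)) : Finset (∀ j, Fin (nn j)) :=
    Fintype.piFinset fun j => cyclicInterval (mm j) (t j)
  have card_boxes_through (i : ∀ j, Fin (nn j)) :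
      (Finset.univ.filter fun t => i ∈ box t).card = ∏ j, mm j := by
    have hboxes : (Finset.univ.filter fun t => i ∈ box t) =
        Fintype.piFinset fun j => Finset.univ.filter fun t => i j ∈ cyclicInterval (mm j) t := by
      ext t
      simp [box]
    simp only [hboxes, Fintype.card_piFinset, card_filter_mem_cyclicInterval, min_eq_right (hmn _)]
  have card_ones_in_box (t : ∀ j, Fin (nn j)) :
      (Finset.univ.filter fun i => M i = true ∧ i ∈ box t).card ≤ exd mm A := by
    simpa only [card_cyclicInterval, min_eq_right (hmn _)] using
      card_ones_filter_mem_piFinset_le_exd hM fun j => cyclicInterval (mm j) (t j)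
  have double_count := Finset.card_mul_le_card_mul (fun i t => i ∈ box t)
    (s := Finset.univ.filter fun i => M i = true) (t := Finset.univ)
    (fun i _ => (card_boxes_through i).ge)
    (fun t _ => (congrArg Finset.card (Finset.filter_filter _ _ _)).trans_le (card_ones_in_box t))
  simpa only [ones, Finset.card_univ, Fintype.card_pi, Fintype.card_fin] using double_count

theorem exd_mul_prod_le_prod_mul_exd (A : (∀ j, Fin (kk j)) → Bool) {mm : ι → ℕ} (hmn : mm ≤ nn) :
    exd nn A * ∏ j, mm j ≤ (∏ j, nn j) * exd mm A := by
  rcases exd_eq_zero_or_exists_ones_eq nn A with hzero | ⟨M, hM, hones⟩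
  · simp [hzero]
  · exact hones ▸ ones_mul_prod_le_prod_mul_exd hM hmn

theorem stmt_4_general {𝕜 : Type*} [Field 𝕜] [LinearOrder 𝕜] [IsStrictOrderedRing 𝕜] [Nonempty ι]
    (n : ι → ℕ) {m : ℕ} (hm : 0 < m) (hmn : ∀ i, m ≤ n i) {K : 𝕜}
    (h : (exd (fun _ : ι => m) A : 𝕜) ≤ K * (m : 𝕜) ^ (Fintype.card ι - 1)) :
    (exd n A : 𝕜) ≤ K * (∏ i, (n i : 𝕜)) / (m : 𝕜) := by
  have hm' : (0 : 𝕜) < m := Nat.cast_pos.2 hm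
  have hdensity : (exd n A : 𝕜) * (m : 𝕜) ^ Fintype.card ι ≤
      (∏ i, (n i : 𝕜)) * (exd (fun _ : ι => m) A : 𝕜) := by
    have hnat := exd_mul_prod_le_prod_mul_exd A (mm := fun _ => m) hmn
    rw [Finset.prod_const, Finset.card_univ] at hnat
    exact_mod_cast hnat
  rw [le_div_iff₀ hm']
  refine le_of_mul_le_mul_right ?_ (pow_pos hm' (Fintype.card ι - 1))
  calc (exd n A : 𝕜) * m * (m : 𝕜) ^ (Fintype.card ι - 1)
      = (exd n A : 𝕜) * (m : 𝕜) ^ Fintype.card ι := by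
        rw [mul_assoc, mul_pow_sub_one Fintype.card_ne_zero]
    _ ≤ (∏ i, (n i : 𝕜)) * (exd (fun _ : ι => m) A : 𝕜) := hdensity
    _ ≤ (∏ i, (n i : 𝕜)) * (K * (m : 𝕜) ^ (Fintype.card ι - 1)) := by gcongr
    _ = K * (∏ i, (n i : 𝕜)) * (m : 𝕜) ^ (Fintype.card ι - 1) := by ring

end ExtremalNumber

/-- If `ex_d(n,A) ≤ K·n^(d−1)` for all positive `n`, then for all positive
`n₁,…,n_d`, `ex_d(n₁×⋯×n_d, A) ≤ K·(n₁⋯n_d)/(min_i n_i)`. -/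
theorem stmt_4 (d : ℕ) (hd : 1 ≤ d) (kk : Fin d → ℕ) (A : (∀ j, Fin (kk j)) → Bool)
    (K : ℝ) (hK : 0 ≤ K)
    (h : ∀ n : ℕ, 0 < n → (exd (fun _ : Fin d => n) A : ℝ) ≤ K * (n : ℝ) ^ (d - 1))
    (n : Fin d → ℕ) (hn : ∀ i, 0 < n i) :
    (exd n A : ℝ) ≤ K * (∏ i, (n i : ℝ)) / ((⨅ i, n i : ℕ) : ℝ) := by
  have : Nonempty (Fin d) := ⟨⟨0, hd⟩⟩
  have hmin : 1 ≤ ⨅ i, n i := le_ciInf hn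
  exact stmt_4_general n hmin (fun i => ciInf_le' n i) (by simpa using h _ hmin)
end

section
/- Let n ≥ 0, d ≥ 1, and let F be a subset of [n] = {1,…,n}. Then the number N of permutation d-partitions Q of [n] such that F is a prefix union of Q satisfies ((d−1)!)² · N = (|F| + d − 1)! · (n − |F| + d − 1)!; that is, N = (|F|+d−1)!/(d−1)! · (n−|F|+d−1)!/(d−1)!. -/
/-!
Cutting each sequence of `Q` at the end of its prefix identifies the permutation partitions with
prefix union `F` with the pairs consisting of a permutation partition of `F` and one of the
complement of `F`: the cut is recovered from `Q` because the elements of `F` come first in each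
sequence. A permutation partition of a set of size `k` into `d` sequences amounts to the
concatenation of its sequences, one of `k!` permutations, together with their lengths, one of
`(d + k - 1).choose k` weak compositions of `k`; hence there are `d (d + 1) ⋯ (d + k - 1)` of them.
-/

/-- A permutation d-partition of `[n]`: an ordered partition of a permutation of the
elements of `[n]` into `d` (possibly empty) sequences. -/
def IsPermPartition {n d : ℕ} (Q : Fin d → List (Fin n)) : Prop :=
  (List.ofFn Q).flatten.Perm (List.finRange n)

/-- `F` is a prefix union of the permutation d-partition `Q`. -/
def IsPrefixUnion {n d : ℕ} (Q : Fin d → List (Fin n)) (F : Finset (Fin n)) : Prop :=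
  ∃ t : Fin d → ℕ, (∀ j, t j ≤ (Q j).length) ∧
    F = Finset.univ.biUnion fun j => ((Q j).take (t j)).toFinset

section ListPartitions

open Set

variable {ι α : Type*} [Fintype ι]

variable (ι) in
/-- The permutation partitions of a multiset `m` into sequences indexed by `ι`. They are encoded by
the multiset sum of the sequences rather than by their concatenation, so that `ι` needs no order. -/
def listPartitions (m : Multiset α) : Set (ι → List α) :=
  {Q | ∑ j, (Q j : Multiset α) = m}

lemma mem_listPartitions {Q : ι → List α} {m : Multiset α} :
    Q ∈ listPartitions ι m ↔ ∑ j, (Q j : Multiset α) = m :=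
  Iff.rfl

lemma coe_flatten_ofFn {d : ℕ} (Q : Fin d → List α) :
    ((List.ofFn Q).flatten : Multiset α) = ∑ j, (Q j : Multiset α) := by
  induction d with
  | zero => simp
  | succ d ih => simp [List.ofFn_succ, Fin.sum_univ_succ, ← Multiset.coe_add, ih]

lemma mem_listPartitions_fin_iff {d : ℕ} {Q : Fin d → List α} {m : Multiset α} :
    Q ∈ listPartitions (Fin d) m ↔ ((List.ofFn Q).flatten : Multiset α) = m := by
  rw [coe_flatten_ofFn, mem_listPartitions]

lemma mem_iff_exists_mem_of_mem_listPartitions {Q : ι → List α} {m : Multiset α}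
    (hQ : Q ∈ listPartitions ι m) {x : α} : x ∈ m ↔ ∃ j, x ∈ Q j := by
  rw [← mem_listPartitions.mp hQ]
  simp [Multiset.mem_sum]

lemma ncard_setOf_coe_eq {m : Multiset α} (hm : m.Nodup) :
    {l : List α | (l : Multiset α) = m}.ncard = m.card.factorial := by
  classical
  induction m using Quotient.inductionOn with | _ l =>
  have hperm : {l' : List α | (l' : Multiset α) = l} =
      (l.permutations.toFinset : Set (List α)) := by
    ext l'
    simp
  simp only [Multiset.quot_mk_to_coe, Multiset.coe_nodup, Multiset.coe_card] at hm ⊢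
  rw [hperm, ncard_coe_finset, List.toFinset_card_of_nodup (List.nodup_permutations l hm),
    List.length_permutations]

variable (ι) in
lemma ncard_setOf_sum_eq (k : ℕ) :
    {c : ι → ℕ | ∑ j, c j = k}.ncard = (Fintype.card ι).multichoose k := by
  classical
  rw [← Sym.card_sym_eq_multichoose, ← Nat.card_eq_fintype_card]
  exact (Nat.card_congr (Sym.equivNatSumOfFintype ι k)).symm

lemma exists_flatten_ofFn_eq_and_length_eq {d : ℕ} (l : List α) (c : Fin d → ℕ)
    (hc : ∑ j, c j = l.length) :
    ∃ Q : Fin d → List α, (List.ofFn Q).flatten = l ∧ ∀ j, (Q j).length = c j := by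
  have hsum : (List.ofFn c).sum = l.length := by rw [List.sum_ofFn, hc]
  let blocks := (List.ofFn c).splitLengths l
  have hblocks : blocks.length = d := by simp [blocks]
  have hofFn : List.ofFn (fun j : Fin d => blocks[j]) = blocks :=
    List.ext_getElem (by simp [hblocks]) (by simp)
  refine ⟨fun j => blocks[j], ?_, fun j => ?_⟩
  · rw [hofFn, List.flatten_splitLengths _ _ hsum.ge]
  · simpa using List.splitLengths_length_getElem l _ hsum.le j (by simp)

lemma bijOn_flatten_length_listPartitions (d : ℕ) (m : Multiset α) :
    BijOn (fun Q : Fin d → List α => ((List.ofFn Q).flatten, fun j => (Q j).length))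
      (listPartitions (Fin d) m)
      ({l : List α | (l : Multiset α) = m} ×ˢ {c : Fin d → ℕ | ∑ j, c j = m.card}) := by
  refine ⟨fun Q hQ => ⟨mem_listPartitions_fin_iff.mp hQ, ?_⟩, fun Q _ Q' _ hQQ' => ?_, ?_⟩
  · simp [← mem_listPartitions.mp hQ]
  · obtain ⟨hflatten, hlength⟩ := Prod.mk.inj hQQ'
    refine List.ofFn_injective (List.eq_iff_flatten_eq.mpr ⟨hflatten, ?_⟩)
    rw [List.map_ofFn, List.map_ofFn]
    exact congrArg List.ofFn hlength
  · rintro ⟨l, c⟩ ⟨rfl, hc⟩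
    obtain ⟨Q, hflatten, hlength⟩ :=
      exists_flatten_ofFn_eq_and_length_eq l c (hc.trans (Multiset.coe_card l))
    exact ⟨Q, mem_listPartitions_fin_iff.mpr (by rw [hflatten]),
      Prod.ext hflatten (funext hlength)⟩

lemma bijOn_comp_equiv_listPartitions {κ : Type*} [Fintype κ] (e : κ ≃ ι) (m : Multiset α) :
    BijOn (fun Q : ι → List α => Q ∘ e) (listPartitions ι m) (listPartitions κ m) := by
  refine (e.symm.arrowCongr (Equiv.refl (List α))).bijOn fun Q => ?_
  exact Eq.congr_left (e.sum_comp fun j => (Q j : Multiset α))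

theorem ncard_listPartitions {m : Multiset α} (hm : m.Nodup) :
    (listPartitions ι m).ncard = (Fintype.card ι).ascFactorial m.card := by
  calc (listPartitions ι m).ncard
    _ = (listPartitions (Fin (Fintype.card ι)) m).ncard :=
      (bijOn_comp_equiv_listPartitions (Fintype.equivFin ι).symm m).ncard_eq
    _ = {l : List α | (l : Multiset α) = m}.ncard *
        {c : Fin (Fintype.card ι) → ℕ | ∑ j, c j = m.card}.ncard := by
      rw [(bijOn_flatten_length_listPartitions _ m).ncard_eq, ncard_prod]
    _ = m.card.factorial * (Fintype.card ι).multichoose m.card := by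
      rw [ncard_setOf_coe_eq hm, ncard_setOf_sum_eq, Fintype.card_fin]
    _ = (Fintype.card ι).ascFactorial m.card := by
      rw [Nat.multichoose_eq, Nat.ascFactorial_eq_factorial_mul_choose']

lemma append_mem_listPartitions {P R : ι → List α} {m m' : Multiset α}
    (hP : P ∈ listPartitions ι m) (hR : R ∈ listPartitions ι m') :
    (fun j => P j ++ R j) ∈ listPartitions ι (m + m') := by
  rw [← mem_listPartitions.mp hP, ← mem_listPartitions.mp hR]
  simp [listPartitions, ← Multiset.coe_add, Finset.sum_add_distrib]

lemma drop_mem_listPartitions {Q : ι → List α} {t : ι → ℕ} {m m' : Multiset α}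
    (hQ : Q ∈ listPartitions ι (m + m'))
    (htake : (fun j => (Q j).take (t j)) ∈ listPartitions ι m) :
    (fun j => (Q j).drop (t j)) ∈ listPartitions ι m' := by
  refine add_left_cancel (a := m) ?_
  rw [← mem_listPartitions.mp hQ, ← mem_listPartitions.mp htake, ← Finset.sum_add_distrib]
  simp

variable (ι) in
/-- The permutation partitions of `m + m'` having `m` as a prefix union, where the prefix union is
again taken as a multiset sum. -/
def prefixListPartitions (m m' : Multiset α) : Set (ι → List α) :=
  {Q ∈ listPartitions ι (m + m') | ∃ t : ι → ℕ, (∀ j, t j ≤ (Q j).length) ∧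
    (fun j => (Q j).take (t j)) ∈ listPartitions ι m}

lemma filter_append_eq_left [DecidableEq α] {P R : ι → List α} {m m' : Multiset α}
    (hmm' : Disjoint m m') (hP : P ∈ listPartitions ι m) (hR : R ∈ listPartitions ι m') (j : ι) :
    (P j ++ R j).filter (· ∈ m) = P j := by
  have hPj : ∀ x ∈ P j, x ∈ m := fun x hx =>
    (mem_iff_exists_mem_of_mem_listPartitions hP).mpr ⟨j, hx⟩
  have hRj : ∀ x ∈ R j, x ∉ m := fun x hx hxm =>
    Multiset.disjoint_left.mp hmm' hxm ((mem_iff_exists_mem_of_mem_listPartitions hR).mpr ⟨j, hx⟩)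
  rw [List.filter_append, List.filter_eq_self.mpr (by simpa using hPj),
    List.filter_eq_nil_iff.mpr (by simpa using hRj), List.append_nil]

lemma bijOn_append_prefixListPartitions {m m' : Multiset α} (hmm' : Disjoint m m') :
    BijOn (fun (p : (ι → List α) × (ι → List α)) j => p.1 j ++ p.2 j)
      (listPartitions ι m ×ˢ listPartitions ι m') (prefixListPartitions ι m m') := by
  classical
  refine ⟨?_, ?_, ?_⟩
  · rintro ⟨P, R⟩ ⟨hP, hR⟩
    exact ⟨append_mem_listPartitions hP hR, fun j => (P j).length, by simp, by simpa using hP⟩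
  · rintro ⟨P, R⟩ ⟨hP, hR⟩ ⟨P', R'⟩ ⟨hP', hR'⟩ h
    have happend : ∀ j, P j ++ R j = P' j ++ R' j := congrFun h
    have hPP' (j : ι) : P j = P' j := calc
      P j = (P j ++ R j).filter (· ∈ m) := (filter_append_eq_left hmm' hP hR j).symm
      _ = (P' j ++ R' j).filter (· ∈ m) := by rw [happend j]
      _ = P' j := filter_append_eq_left hmm' hP' hR' j
    have hRR' (j : ι) : R j = R' j := List.append_cancel_left (hPP' j ▸ happend j)
    exact Prod.ext (funext hPP') (funext hRR')
  · rintro Q ⟨hQ, t, -, htake⟩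
    exact ⟨(_, _), ⟨htake, drop_mem_listPartitions hQ htake⟩,
      funext fun j => List.take_append_drop (t j) (Q j)⟩

theorem ncard_prefixListPartitions {m m' : Multiset α} (hm : m.Nodup) (hm' : m'.Nodup)
    (hmm' : Disjoint m m') :
    (prefixListPartitions ι m m').ncard =
      (Fintype.card ι).ascFactorial m.card * (Fintype.card ι).ascFactorial m'.card := by
  rw [← (bijOn_append_prefixListPartitions hmm').ncard_eq, ncard_prod, ncard_listPartitions hm,
    ncard_listPartitions hm']

lemma take_mem_listPartitions_iff [DecidableEq α] {Q : ι → List α} {S : Finset α}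
    (hQ : Q ∈ listPartitions ι S.val) (t : ι → ℕ) (F : Finset α) :
    (fun j => (Q j).take (t j)) ∈ listPartitions ι F.val ↔
      F = Finset.univ.biUnion fun j => ((Q j).take (t j)).toFinset := by
  have hle : ∑ j, ((Q j).take (t j) : Multiset α) ≤ S.val := by
    rw [← mem_listPartitions.mp hQ]
    exact Finset.sum_le_sum fun j _ => (List.take_sublist _ _).subperm
  rw [mem_listPartitions, Multiset.Nodup.ext (Multiset.nodup_of_le hle S.nodup) F.nodup,
    Finset.ext_iff]
  simp [Multiset.mem_sum, iff_comm]

lemma mem_prefixListPartitions_iff [DecidableEq α] {Q : ι → List α} {F S : Finset α}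
    (hFS : F ⊆ S) :
    Q ∈ prefixListPartitions ι F.val (S \ F).val ↔
      Q ∈ listPartitions ι S.val ∧ ∃ t : ι → ℕ, (∀ j, t j ≤ (Q j).length) ∧
        F = Finset.univ.biUnion fun j => ((Q j).take (t j)).toFinset := by
  have hsum : F.val + (S \ F).val = S.val := by
    rw [Finset.sdiff_val, add_tsub_cancel_of_le (Finset.val_le_iff.mpr hFS)]
  rw [prefixListPartitions, hsum]
  exact and_congr_right fun hQ => by simp only [take_mem_listPartitions_iff hQ]

theorem stmt_6_general [Nonempty ι] [DecidableEq α] {F S : Finset α} (hFS : F ⊆ S) :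
    (Nat.factorial (Fintype.card ι - 1)) ^ 2 *
        {Q : ι → List α | Q ∈ listPartitions ι S.val ∧ ∃ t : ι → ℕ,
          (∀ j, t j ≤ (Q j).length) ∧
            F = Finset.univ.biUnion fun j => ((Q j).take (t j)).toFinset}.ncard =
      Nat.factorial (F.card + Fintype.card ι - 1) *
        Nat.factorial (S.card - F.card + Fintype.card ι - 1) := by
  have hfactorial (k : ℕ) : (k + Fintype.card ι - 1).factorial =
      (Fintype.card ι - 1).factorial * (Fintype.card ι).ascFactorial k := by
    rw [Nat.factorial_mul_ascFactorial' _ _ Fintype.card_pos, add_comm k]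
  have hdisjoint : Disjoint F.val (S \ F).val :=
    Finset.disjoint_val.mpr Finset.disjoint_sdiff
  simp only [← mem_prefixListPartitions_iff hFS, ofPred_mem_eq]
  rw [ncard_prefixListPartitions F.nodup (S \ F).nodup hdisjoint, Finset.card_val,
    Finset.card_val, Finset.card_sdiff_of_subset hFS, hfactorial, hfactorial]
  ring

end ListPartitions

lemma isPermPartition_iff_mem_listPartitions {n d : ℕ} {Q : Fin d → List (Fin n)} :
    IsPermPartition Q ↔ Q ∈ listPartitions (Fin d) (Finset.univ : Finset (Fin n)).val := by
  rw [mem_listPartitions_fin_iff]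
  exact Multiset.coe_eq_coe.symm

/-- For `F ⊆ [n]` and `d ≥ 1`, the number `N` of permutation d-partitions
of `[n]` having `F` as a prefix union satisfies
`((d−1)!)² · N = (|F|+d−1)! · (n−|F|+d−1)!`. -/
theorem stmt_6 (n d : ℕ) (hd : 1 ≤ d) (F : Finset (Fin n)) :
    (Nat.factorial (d - 1)) ^ 2 *
        {Q : Fin d → List (Fin n) | IsPermPartition Q ∧ IsPrefixUnion Q F}.ncard =
      Nat.factorial (F.card + d - 1) * Nat.factorial (n - F.card + d - 1) := by
  have : NeZero d := ⟨Nat.one_le_iff_ne_zero.mp hd⟩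
  simpa [isPermPartition_iff_mem_listPartitions, IsPrefixUnion] using
    stmt_6_general (ι := Fin d) F.subset_univ
end

section
/- For all integers n ≥ 0 and d ≥ 1, the binomial coefficients satisfy C(n + 2d − 2, ⌊n/2⌋ + d − 1) ≤ 4^{d−1} · C(n, ⌊n/2⌋). -/
theorem choose_succ_le_two_mul_choose_half (n r : ℕ) :
    (n + 1).choose r ≤ 2 * n.choose (n / 2) := by
  cases r with
  | zero =>
    have middle_pos : 0 < n.choose (n / 2) := Nat.choose_pos (Nat.div_le_self n 2)
    rw [Nat.choose_zero_right]
    lia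
  | succ r =>
    calc (n + 1).choose (r + 1)
        = n.choose r + n.choose (r + 1) := Nat.choose_succ_succ' n r
      _ ≤ n.choose (n / 2) + n.choose (n / 2) :=
          add_le_add (Nat.choose_le_middle r n) (Nat.choose_le_middle (r + 1) n)
      _ = 2 * n.choose (n / 2) := (two_mul _).symm

theorem choose_add_le_two_pow_mul_choose_half (n k r : ℕ) :
    (n + k).choose r ≤ 2 ^ k * n.choose (n / 2) := by
  induction k generalizing r with
  | zero => simpa using Nat.choose_le_middle r n
  | succ k ih =>
    calc (n + k + 1).choose r
        ≤ 2 * (n + k).choose ((n + k) / 2) := choose_succ_le_two_mul_choose_half (n + k) r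
      _ ≤ 2 * (2 ^ k * n.choose (n / 2)) := Nat.mul_le_mul_left 2 (ih _)
      _ = 2 ^ (k + 1) * n.choose (n / 2) := by ring

/-- For all `n ≥ 0` and `d ≥ 1`,
`C(n+2d−2, ⌊n/2⌋+d−1) ≤ 4^(d−1) · C(n, ⌊n/2⌋)`. -/
theorem stmt_9 (n d : ℕ) (hd : 1 ≤ d) :
    (n + 2 * d - 2).choose (n / 2 + d - 1) ≤ 4 ^ (d - 1) * n.choose (n / 2) := by
  have row_eq : n + 2 * d - 2 = n + 2 * (d - 1) := by lia
  calc (n + 2 * d - 2).choose (n / 2 + d - 1)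
      = (n + 2 * (d - 1)).choose (n / 2 + d - 1) := by rw [row_eq]
    _ ≤ 2 ^ (2 * (d - 1)) * n.choose (n / 2) :=
        choose_add_le_two_pow_mul_choose_half n (2 * (d - 1)) (n / 2 + d - 1)
    _ = 4 ^ (d - 1) * n.choose (n / 2) := by rw [pow_mul]; norm_num
end

section
/- Let d ≥ 2, k ≥ 1, let A be a permutation d-matrix of size k^d, and let M be an A-free d-matrix of size n×⋯×n, where n = s·t for positive integers s, t. Partition M into blocks: for b = (b₁,…,b_d) ∈ {1,…,t}^d, the block S_b consists of the entries M(a₁,…,a_d) with s(b_j − 1) < a_j ≤ s·b_j for all j. Fix a direction i ∈ {1,…,d} and values b_j ∈ {1,…,t} for all j ≠ i; the corresponding i-blockcolumn consists of the t blocks obtained by letting b_i range over {1,…,t}. Then the number of blocks S in this i-blockcolumn such that Proj_i S contains Proj_i A is at most (k − 1)·C(s^{d−1}, k). -/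
/-- The block of a d-matrix of size (s·t)^d at block-position `b`: the entries
`M(a)` with `s·(bⱼ − 1) < aⱼ ≤ s·bⱼ` (0-indexed: `s·bⱼ ≤ aⱼ < s·(bⱼ+1)`). -/
def blockOf {d s t : ℕ} (M : (Fin d → Fin (s * t)) → Bool) (b : Fin d → Fin t) :
    (Fin d → Fin s) → Bool :=
  fun a => M fun j => ⟨s * (b j).val + (a j).val, by
    have h2 : ((b j) : ℕ) < t := (b j).isLt
    calc s * (b j).val + (a j).val < s * ((b j).val + 1) := by
          rw [Nat.mul_succ]; omega
      _ ≤ s * t := Nat.mul_le_mul_left s h2⟩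

/-- The projection of a d-matrix along direction `i`: the (d−1)-matrix indexed by the
remaining coordinates whose entry is 1 iff some entry of `M` with those coordinates is 1. -/
def proj {d s : ℕ} (i : Fin d) (M : (Fin d → Fin s) → Bool) :
    ({j : Fin d // j ≠ i} → Fin s) → Bool :=
  fun v => decide (∃ c : Fin s,
    M (fun j => if h : j = i then c else v ⟨j, h⟩) = true)

section Counting

lemma descFactorial_mul_descFactorial_le (a b k : ℕ) :
    a.descFactorial k * b.descFactorial k ≤ (a * b).descFactorial k := by
  induction k with
  | zero => simp
  | succ k ih =>
    have factor_le : (a - k) * (b - k) ≤ a * b - k := by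
      rcases le_or_gt a k with hak | hak
      · simp [Nat.sub_eq_zero_of_le hak]
      · calc (a - k) * (b - k) ≤ a * (b - k) := by gcongr; exact a.sub_le k
          _ = a * b - a * k := Nat.mul_sub a b k
          _ ≤ a * b - k := Nat.sub_le_sub_left (Nat.le_mul_of_pos_left k (by lia)) _
    simp only [Nat.descFactorial_succ]
    calc (a - k) * a.descFactorial k * ((b - k) * b.descFactorial k)
        = (a - k) * (b - k) * (a.descFactorial k * b.descFactorial k) := mul_mul_mul_comm ..
      _ ≤ (a * b - k) * (a * b).descFactorial k := Nat.mul_le_mul factor_le ih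

lemma choose_mul_choose_le_choose_mul (a b k : ℕ) :
    a.choose k * b.choose k ≤ (a * b).choose k := by
  refine Nat.le_of_mul_le_mul_left ?_ k.factorial_pos
  calc k.factorial * (a.choose k * b.choose k)
      ≤ k.factorial * a.choose k * (k.factorial * b.choose k) := by
        rw [← mul_assoc]
        exact Nat.mul_le_mul_left _ (Nat.le_mul_of_pos_left _ k.factorial_pos)
    _ ≤ k.factorial * (a * b).choose k := by
        simpa only [Nat.descFactorial_eq_factorial_mul_choose] using
          descFactorial_mul_descFactorial_le a b k

lemma choose_pow_le_choose_pow (s k : ℕ) {m : ℕ} (hm : 1 ≤ m) :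
    s.choose k ^ m ≤ (s ^ m).choose k := by
  induction m, hm using Nat.le_induction with
  | base => simp
  | succ m _ ih =>
    rw [pow_succ, pow_succ]
    exact (Nat.mul_le_mul_right _ ih).trans (choose_mul_choose_le_choose_mul ..)

lemma natCard_orderEmbedding_fin (k : ℕ) (α : Type*) [LinearOrder α] :
    Nat.card (Fin k ↪o α) = (Nat.card α).choose k := by
  rw [Nat.card_congr Set.powersetCard.ofFinEmbEquiv, Set.powersetCard.card]

lemma exists_orderEmbedding_fin_monochromatic {α β : Type*} [LinearOrder α] [Finite α] [Finite β]
    (color : α → β) {k : ℕ} (h : (k - 1) * Nat.card β < Nat.card α) :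
    ∃ (y : β) (c : Fin k ↪o α), ∀ v, color (c v) = y := by
  classical
  have := Fintype.ofFinite α
  have := Fintype.ofFinite β
  rw [Nat.card_eq_fintype_card, Nat.card_eq_fintype_card, mul_comm] at h
  obtain ⟨y, hy⟩ := Fintype.exists_lt_card_fiber_of_mul_lt_card color h
  have k_le_fiber := Nat.le_of_pred_lt hy
  exact ⟨y, Finset.orderEmbOfCardLe _ k_le_fiber, fun v => by
    simpa using Finset.orderEmbOfCardLe_mem _ k_le_fiber v⟩

end Counting

section Hypermatrices

/-- The increasing maps `f` exhibit a copy of the hypermatrix `A` in `M`. They are bundled as order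
embeddings so that the possible witnesses of `MatContains M A` form a finite type. -/
def IsCopy {ι : Type*} {kk nn : ι → ℕ} (M : (∀ j, Fin (nn j)) → Bool)
    (A : (∀ j, Fin (kk j)) → Bool) (f : ∀ j, Fin (kk j) ↪o Fin (nn j)) : Prop :=
  ∀ p, A p = true → M (fun j => f j (p j)) = true

lemma matContains_iff_exists_isCopy {ι : Type*} {kk nn : ι → ℕ} {M : (∀ j, Fin (nn j)) → Bool}
    {A : (∀ j, Fin (kk j)) → Bool} : MatContains M A ↔ ∃ f, IsCopy M A f :=
  ⟨fun ⟨f, hf, hfA⟩ => ⟨fun j => OrderEmbedding.ofStrictMono (f j) (hf j), hfA⟩,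
    fun ⟨f, hf⟩ => ⟨fun j => f j, fun j => (f j).strictMono, hf⟩⟩

/-- The tuple with `i`-th coordinate `c` whose other coordinates are given by `v`: the points over
`v` for the projection along direction `i`. -/
def insertCoord {ι β : Type*} [DecidableEq ι] (i : ι) (c : β) (v : {j // j ≠ i} → β) : ι → β :=
  fun j => if h : j = i then c else v ⟨j, h⟩

@[simp]
lemma insertCoord_self {ι β : Type*} [DecidableEq ι] (i : ι) (c : β) (v : {j // j ≠ i} → β) :
    insertCoord i c v i = c :=
  dif_pos rfl

lemma insertCoord_of_ne {ι β : Type*} [DecidableEq ι] {i j : ι} (h : j ≠ i) (c : β)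
    (v : {j // j ≠ i} → β) : insertCoord i c v j = v ⟨j, h⟩ :=
  dif_neg h

lemma insertCoord_restrict {ι β : Type*} [DecidableEq ι] (i : ι) (p : ι → β) :
    insertCoord i (p i) (fun j => p j) = p := by
  funext j
  by_cases hj : j = i
  · rw [hj, insertCoord_self]
  · rw [insertCoord_of_ne hj]

variable {d k s t : ℕ} {i : Fin d}

lemma proj_eq_true_iff {N : (Fin d → Fin s) → Bool} {v : {j // j ≠ i} → Fin s} :
    proj i N v = true ↔ ∃ c, N (insertCoord i c v) = true :=
  decide_eq_true_iff

/-- The coordinate, in a matrix cut into `t` blocks of side `s`, of offset `a` in block `x`. -/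
def blockIndex (x : Fin t) (a : Fin s) : Fin (s * t) :=
  (Fin.mkDivMod x a).cast (mul_comm t s)

lemma blockOf_apply (M : (Fin d → Fin (s * t)) → Bool) (b : Fin d → Fin t) (a : Fin d → Fin s) :
    blockOf M b a = M fun j => blockIndex (b j) (a j) :=
  rfl

lemma blockIndex_lt_of_block_lt {x y : Fin t} (h : x < y) (a a' : Fin s) :
    blockIndex x a < blockIndex y a' :=
  calc s * x.val + a.val < s * (x.val + 1) := by rw [mul_add_one]; lia
    _ ≤ s * y.val := Nat.mul_le_mul_left s h
    _ ≤ s * y.val + a'.val := Nat.le_add_right ..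

lemma strictMono_blockIndex (x : Fin t) : StrictMono (blockIndex (s := s) x) :=
  fun _ _ h => Nat.add_lt_add_left h _

variable {A : (Fin d → Fin k) → Bool}

lemma exists_heights_of_isCopy_proj (hs : 0 < s) (hA : Set.InjOn (fun p => p i) {p | A p = true})
    {N : Fin k → (Fin d → Fin s) → Bool} {f : {j // j ≠ i} → Fin k ↪o Fin s}
    (hf : ∀ v, IsCopy (proj i (N v)) (proj i A) f) :
    ∃ e : Fin k → Fin s, ∀ p, A p = true →
      N (p i) (insertCoord i (e (p i)) fun j => f j (p j)) = true := by
  suffices height_of_layer : ∀ v, ∃ c : Fin s, ∀ p, A p = true → p i = v →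
      N v (insertCoord i c fun j => f j (p j)) = true by
    choose e he using height_of_layer
    exact ⟨e, fun p hp => he (p i) p hp rfl⟩
  intro v
  by_cases h_layer : ∃ p, A p = true ∧ p i = v
  · obtain ⟨p, hp, hpv⟩ := h_layer
    have h_proj : proj i A (fun j => p j) = true :=
      proj_eq_true_iff.2 ⟨p i, by rwa [insertCoord_restrict]⟩
    obtain ⟨c, hc⟩ := proj_eq_true_iff.1 (hf v _ h_proj)
    refine ⟨c, fun q hq hqv => ?_⟩
    rwa [hA hq hp (hqv.trans hpv.symm)]
  · exact ⟨⟨0, hs⟩, fun p hp hpv => (h_layer ⟨p, hp, hpv⟩).elim⟩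

lemma matContains_of_isCopy_proj_blocks (hs : 0 < s)
    (hA : Set.InjOn (fun p => p i) {p | A p = true}) {M : (Fin d → Fin (s * t)) → Bool}
    (b : Fin d → Fin t) (c : Fin k ↪o Fin t) {f : {j // j ≠ i} → Fin k ↪o Fin s}
    (hf : ∀ v, IsCopy (proj i (blockOf M (Function.update b i (c v)))) (proj i A) f) :
    MatContains M A := by
  obtain ⟨e, he⟩ := exists_heights_of_isCopy_proj hs hA hf
  refine ⟨fun j v => blockIndex (Function.update b i (c v) j) (insertCoord i (e v) (f · v) j),
    fun j v w hvw => ?_, fun p hp => ?_⟩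
  · obtain rfl | hj := eq_or_ne j i
    · simpa using blockIndex_lt_of_block_lt (c.strictMono hvw) (e v) (e w)
    · simpa [hj, insertCoord_of_ne] using
        strictMono_blockIndex (b j) ((f ⟨j, hj⟩).strictMono hvw)
  · rw [← he p hp, blockOf_apply]
    congr 1
    funext j
    obtain rfl | hj := eq_or_ne j i
    · simp
    · simp [hj, insertCoord_of_ne]

theorem stmt_11_general (hs : 0 < s) (hA : Set.InjOn (fun p => p i) {p | A p = true})
    {M : (Fin d → Fin (s * t)) → Bool} (hM : ¬ MatContains M A) (b : Fin d → Fin t) :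
    {c : Fin t |
        MatContains (proj i (blockOf M (Function.update b i c))) (proj i A)}.ncard ≤
      (k - 1) * s.choose k ^ (d - 1) := by
  by_contra! h_many
  set S := {c : Fin t | MatContains (proj i (blockOf M (Function.update b i c))) (proj i A)}
  have h_copy (c : S) := matContains_iff_exists_isCopy.1 c.2
  choose f hf using h_copy
  have card_maps : Nat.card ({j // j ≠ i} → Fin k ↪o Fin s) = s.choose k ^ (d - 1) := by
    rw [Nat.card_fun, natCard_orderEmbedding_fin, Nat.card_fin]
    simp
  rw [← card_maps, ← Nat.card_coe_set_eq] at h_many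
  obtain ⟨g, c, hc⟩ := exists_orderEmbedding_fin_monochromatic f h_many
  refine hM (matContains_of_isCopy_proj_blocks hs hA b (c.trans (OrderEmbedding.subtype _))
    (f := g) fun v => ?_)
  rw [← hc v]
  exact hf (c v)

lemma IsPermMatrix.injOn_coord (hA : IsPermMatrix A) (i : Fin d) :
    Set.InjOn (fun p => p i) {p | A p = true} :=
  fun _ hp q hq hpq => (hA.2 i (q i)).unique ⟨hp, hpq⟩ ⟨hq, rfl⟩

end Hypermatrices

/-- Let `d ≥ 2`, `k ≥ 1`, `A` a permutation d-matrix of size `k^d`, and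
`M` an `A`-free d-matrix of size `(s·t)^d`, partitioned into blocks of size `s^d`. Fix a
direction `i` and block coordinates `b j` for `j ≠ i`. Then the number of blocks `S` in the
corresponding i-blockcolumn with `Proj_i S` containing `Proj_i A` is at most
`(k−1)·C(s^(d−1), k)`. -/
theorem stmt_11 (d k s t : ℕ) (hd : 2 ≤ d) (hk : 1 ≤ k) (hs : 0 < s) (ht : 0 < t)
    (A : (Fin d → Fin k) → Bool) (hA : IsPermMatrix A)
    (M : (Fin d → Fin (s * t)) → Bool) (hM : ¬ MatContains M A)
    (i : Fin d) (b : Fin d → Fin t) :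
    {c : Fin t |
        MatContains (proj i (blockOf M (Function.update b i c))) (proj i A)}.ncard ≤
      (k - 1) * (s ^ (d - 1)).choose k :=
  (stmt_11_general hs (hA.injOn_coord i) hM b).trans
    (Nat.mul_le_mul_left _ (choose_pow_le_choose_pow s k (Nat.le_sub_one_of_lt hd)))
end

section
/- For every finite poset P and every n, any family F of subsets of [n] = {1,…,n} that does not contain P as a weak subposet satisfies |F| ≤ (|P| − 1) · C(n, ⌊n/2⌋); that is, La(n,P) ≤ (|P| − 1) · C(n, ⌊n/2⌋). -/
/-- The family `F` of subsets of `[n]` contains the poset `P` as a weak subposet. -/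
def ContainsWeak (P : Type*) [PartialOrder P] {n : ℕ}
    (F : Finset (Finset (Fin n))) : Prop :=
  ∃ α : P → Finset (Fin n), Function.Injective α ∧ (∀ p, α p ∈ F) ∧
    ∀ x y : P, x < y → α x ⊂ α y

/-!
A linear extension of `P` maps `P` injectively and strictly monotonically into a chain of `|P|`
elements, so it suffices to find such a chain. If every chain in a finite poset has fewer than
`|P|` elements, the heights of its elements take at most `|P| - 1` values. Elements of equal height
form an antichain, and in the Boolean lattice an antichain has at most `C(n, ⌊n/2⌋)` elements by
Sperner's theorem.
-/

open Finset

section Chains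

variable {α : Type*} [PartialOrder α]

theorem isAntichain_setOf_height_eq (m : ℕ) :
    IsAntichain (· ≤ ·) {a : α | Order.height a = m} := by
  intro a ha b hb hne hle
  have hlt : Order.height a < Order.height b :=
    Order.height_strictMono (hle.lt_of_ne hne) (ha.trans_lt (ENat.natCast_lt_top m))
  exact hlt.ne (ha.trans hb.symm)

theorem exists_ltSeries_length_eq_of_mul_lt_card [Fintype α] {k w : ℕ}
    (hw : ∀ t : Finset α, IsAntichain (· ≤ ·) (t : Set α) → #t ≤ w)
    (hcard : k * w < Fintype.card α) : ∃ p : LTSeries α, p.length = k := by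
  classical
  by_contra! hno
  have height_lt (a : α) : Order.height a < k := by
    by_contra! hle
    obtain ⟨p, -, hp⟩ := Order.exists_series_of_le_height a hle
    exact hno p hp
  choose h hh using fun a : α => ENat.ne_top_iff_exists.1 (height_lt a).ne_top
  have maps_to : ∀ a ∈ (univ : Finset α), h a ∈ range k := fun a _ =>
    mem_range.2 (by exact_mod_cast (hh a).trans_lt (height_lt a))
  have level_le : ∀ m ∈ range k, #{a | h a = m} ≤ w := fun m _ =>
    hw _ <| (isAntichain_setOf_height_eq m).subset fun a ha => by simpa [← hh a] using ha
  have card_le : Fintype.card α ≤ w * k := by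
    simpa using card_le_mul_card_image_of_maps_to maps_to w level_le
  exact hcard.not_ge (card_le.trans_eq (mul_comm w k))

theorem exists_strictMono_fin_of_mul_lt_card {k w : ℕ} {s : Finset α}
    (hw : ∀ t ⊆ s, IsAntichain (· ≤ ·) (t : Set α) → #t ≤ w)
    (hcard : (k - 1) * w < #s) : ∃ c : Fin k → α, StrictMono c ∧ ∀ i, c i ∈ s := by
  cases k with
  | zero => exact ⟨Fin.elim0, fun i => i.elim0, fun i => i.elim0⟩
  | succ k =>
    have hw' (t : Finset s) (ht : IsAntichain (· ≤ ·) (t : Set s)) : #t ≤ w := by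
      rw [← card_map (.subtype (· ∈ s))]
      refine hw _ (map_subtype_subset t) ?_
      simpa using ht.image_embedding (OrderEmbedding.subtype (· ∈ s))
    obtain ⟨p, rfl⟩ := exists_ltSeries_length_eq_of_mul_lt_card hw'
      (hcard.trans_eq (Fintype.card_coe s).symm)
    exact ⟨fun i => p i, p.strictMono, fun i => (p i).2⟩

end Chains

theorem exists_equiv_fin_strictMono (P : Type*) [PartialOrder P] [Fintype P] :
    ∃ e : P ≃ Fin (Fintype.card P), StrictMono e := by
  let : Fintype (LinearExtension P) := ‹Fintype P›
  let e : Fin (Fintype.card P) ≃o LinearExtension P := monoEquivOfFin _ rfl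
  have strictMono_toLinearExtension : StrictMono (toLinearExtension (α := P)) :=
    toLinearExtension.monotone.strictMono_of_injective Function.injective_id
  exact ⟨e.symm.toEquiv, e.symm.strictMono.comp strictMono_toLinearExtension⟩

theorem stmt_13_general {P α : Type*} [PartialOrder P] [Fintype P] [PartialOrder α]
    {F : Finset α} {w : ℕ} (hw : ∀ t ⊆ F, IsAntichain (· ≤ ·) (t : Set α) → #t ≤ w)
    (hF : ¬ ∃ f : P → α, Function.Injective f ∧ (∀ p, f p ∈ F) ∧ StrictMono f) :
    #F ≤ (Fintype.card P - 1) * w := by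
  by_contra! hcard
  obtain ⟨c, hc, hcF⟩ := exists_strictMono_fin_of_mul_lt_card hw hcard
  obtain ⟨e, he⟩ := exists_equiv_fin_strictMono P
  exact hF ⟨c ∘ e, hc.injective.comp e.injective, fun p => hcF (e p), hc.comp he⟩

/-- For every finite poset `P` and every `n`, any `P`-free (as a weak
subposet) family of subsets of `[n]` has size at most `(|P|−1)·C(n, ⌊n/2⌋)`. -/
theorem stmt_13 (P : Type) [PartialOrder P] [Fintype P] (n : ℕ)
    (F : Finset (Finset (Fin n))) (hF : ¬ ContainsWeak P F) :
    F.card ≤ (Fintype.card P - 1) * n.choose (n / 2) :=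
  stmt_13_general (fun _ _ ht => by simpa using ht.sperner) fun ⟨f, hinj, hfF, hmono⟩ =>
    hF ⟨f, hinj, hfF, fun _ _ hxy => hmono hxy⟩
end
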